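/- Let Q be a graph class with Q_n nonempty for all sufficiently large n. Suppose there is a graphon W_Q ∈ Q̂ such that Ent(W_Q) = sup_{W∈Q̂} Ent(W), every W ∈ Q̂ with Ent(W) = Ent(W_Q) satisfies δ_□(W, W_Q) = 0, and (log₂|Q_n|)/C(n,2) → Ent(W_Q) as n → ∞, where |Q_n| is the number of labelled graphs on {1,…,n} in Q and C(n,2) = n(n-1)/2. For each large n let G_n be a uniformly random element of Q_n. Then G_n converges to W_Q in probability: for every ε > 0, P(δ_□(W_{G_n}, W_Q) > ε) → 0 as n → ∞. -/

import Mathlib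

open MeasureTheory Set Filter

noncomputable section

/-- A graphon: a symmetric measurable function `ℝ → ℝ → ℝ` with values in `[0,1]`
(only its values on `[0,1]²` matter). -/
def IsGraphon (W : ℝ → ℝ → ℝ) : Prop :=
  (∀ x y, W x y = W y x) ∧ Measurable (Function.uncurry W) ∧
    ∀ x y, W x y ∈ Set.Icc (0 : ℝ) 1

/-- The cut norm `‖U‖_□`, the supremum over measurable `S, T ⊆ [0,1]` of
`|∫_{S×T} U|`. -/
def cutNorm (U : ℝ → ℝ → ℝ) : ℝ :=
  sSup { r : ℝ | ∃ S T : Set ℝ, MeasurableSet S ∧ MeasurableSet T ∧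
    S ⊆ Set.Icc 0 1 ∧ T ⊆ Set.Icc 0 1 ∧
    r = |∫ p in S ×ˢ T, U p.1 p.2| }

/-- `d_□(W₁, W₂) = ‖W₁ - W₂‖_□`. -/
def dCut (W₁ W₂ : ℝ → ℝ → ℝ) : ℝ := cutNorm (fun x y => W₁ x y - W₂ x y)

/-- A Lebesgue-measure-preserving map `[0,1] → [0,1]`. -/
def IsMPSelf (σ : ℝ → ℝ) : Prop :=
  MeasureTheory.MeasurePreserving σ
      (MeasureTheory.volume.restrict (Set.Icc (0:ℝ) 1))
      (MeasureTheory.volume.restrict (Set.Icc (0:ℝ) 1)) ∧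
    Set.MapsTo σ (Set.Icc (0:ℝ) 1) (Set.Icc (0:ℝ) 1)

/-- The cut distance `δ_□(W₁, W₂)`. -/
def deltaCut (W₁ W₂ : ℝ → ℝ → ℝ) : ℝ :=
  sInf { r : ℝ | ∃ σ₁ σ₂ : ℝ → ℝ, IsMPSelf σ₁ ∧ IsMPSelf σ₂ ∧
    r = cutNorm (fun x y => W₁ (σ₁ x) (σ₁ y) - W₂ (σ₂ x) (σ₂ y)) }

/-- The binary entropy function `h` (base-2 logarithm; `logb 2 0 = 0` by convention,
so `h 0 = h 1 = 0`). -/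
def binEnt (x : ℝ) : ℝ := -x * Real.logb 2 x - (1 - x) * Real.logb 2 (1 - x)

/-- `h̃ x = h (min x (1/2))`. -/
def htilde (x : ℝ) : ℝ := binEnt (min x (1/2))

/-- The entropy `Ent(W) = ∫₀¹∫₀¹ h(W(x,y)) dx dy` of a graphon. -/
def graphonEnt (W : ℝ → ℝ → ℝ) : ℝ :=
  ∫ x in Set.Icc (0:ℝ) 1, ∫ y in Set.Icc (0:ℝ) 1, binEnt (W x y)

open Classical in
/-- The graphon `W_G` of a simple graph `G` on `{1, …, n}` (vertices as `Fin n`,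
vertex `i : Fin n` representing `i+1`): `W_G x y = 1` iff `⌈nx⌉⌈ny⌉ ∈ E(G)`. -/
def graphonOfGraph {n : ℕ} (G : SimpleGraph (Fin n)) : ℝ → ℝ → ℝ := fun x y =>
  if ∃ i j : Fin n, G.Adj i j ∧ ⌈(n : ℝ) * x⌉ = ((i : ℕ) : ℤ) + 1 ∧
      ⌈(n : ℝ) * y⌉ = ((j : ℕ) : ℤ) + 1
  then 1 else 0

/-- A labelled graph class: a set of graphs on `{1,…,n}` for each `n`. -/
abbrev GraphClass := ∀ n : ℕ, Set (SimpleGraph (Fin n))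

/-- A graph class is closed under relabelling by permutations. -/
def IsGraphClass (Q : GraphClass) : Prop :=
  ∀ (n : ℕ) (π : Equiv.Perm (Fin n)) (G : SimpleGraph (Fin n)),
    G ∈ Q n → G.comap ⇑π ∈ Q n

/-- A hereditary graph class: a graph class closed under taking induced subgraphs
(relabelled by the order-preserving bijection). -/
def IsHereditary (Q : GraphClass) : Prop :=
  IsGraphClass Q ∧
    ∀ (m n : ℕ) (f : Fin m → Fin n), StrictMono f →
      ∀ G ∈ Q n, G.comap f ∈ Q m

/-- `Q̂`: the set of graphons which are limits (in cut distance) of sequences of graphs in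
the class `Q` whose orders tend to infinity. -/
def limitSet (Q : GraphClass) : Set (ℝ → ℝ → ℝ) :=
  { W | IsGraphon W ∧
    ∃ (nk : ℕ → ℕ) (Gk : ∀ k, SimpleGraph (Fin (nk k))),
      (∀ k, Gk k ∈ Q (nk k)) ∧ Filter.Tendsto nk Filter.atTop Filter.atTop ∧
      Filter.Tendsto (fun k => deltaCut (graphonOfGraph (Gk k)) W) Filter.atTop (nhds 0) }

/-- `C(n,2) = n(n-1)/2` as a real number. -/
def choose2 (n : ℕ) : ℝ := (n : ℝ) * ((n : ℝ) - 1) / 2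

open Classical in
/-- The step function `E[W | P]` obtained by averaging `W` over the products of the
parts of the partition `P` of `[0,1]`. -/
def condExpPart {k : ℕ} (P : Fin k → Set ℝ) (W : ℝ → ℝ → ℝ) : ℝ → ℝ → ℝ := fun x y =>
  ∑ i : Fin k, ∑ j : Fin k,
    if x ∈ P i ∧ y ∈ P j then ⨍ p in (P i) ×ˢ (P j), W p.1 p.2 else 0

/-- `W̄_n`: the step function of `W` for the partition of `[0,1]` into `n` consecutive
intervals of length `1/n`. -/
def barStep (n : ℕ) (W : ℝ → ℝ → ℝ) : ℝ → ℝ → ℝ :=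
  condExpPart (fun i : Fin n => Set.Ioc (((i : ℕ) : ℝ)/n) ((((i : ℕ) : ℝ) + 1)/n)) W

/-- `N̂_□(n, δ; W)`: the number of graphs `G` on `{1,…,n}` with `d_□(W_G, W) ≤ δ`. -/
def NhatCut (n : ℕ) (δ : ℝ) (W : ℝ → ℝ → ℝ) : ℕ :=
  Nat.card {G : SimpleGraph (Fin n) // dCut (graphonOfGraph G) W ≤ δ}

/-- `N_□(n, δ; W)`: the number of graphs `G` on `{1,…,n}` with `δ_□(W_G, W) ≤ δ`. -/
def NCut (n : ℕ) (δ : ℝ) (W : ℝ → ℝ → ℝ) : ℕ :=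
  Nat.card {G : SimpleGraph (Fin n) // deltaCut (graphonOfGraph G) W ≤ δ}

open Classical in
/-- The induced density `p(F; W)` of a graph `F` on `{1,…,k}` in a graphon `W`. -/
def inducedDensity {k : ℕ} (F : SimpleGraph (Fin k)) (W : ℝ → ℝ → ℝ) : ℝ :=
  ∫ x : Fin k → ℝ in Set.univ.pi (fun _ : Fin k => Set.Icc (0:ℝ) 1),
    ∏ i : Fin k, ∏ j : Fin k,
      if i < j then (if F.Adj i j then W (x i) (x j) else 1 - W (x i) (x j)) else 1

open Classical in
/-- The randomness support graphon `1_{rand(W)}` of `W`. -/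
def randIndicator (W : ℝ → ℝ → ℝ) : ℝ → ℝ → ℝ := fun x y =>
  if 0 < W x y ∧ W x y < 1 then 1 else 0

/-- A kernel `U` is `K_r`-free if `∏_{i<j} U(x_i, x_j) = 0` for a.e. `x ∈ [0,1]^r`. -/
def KFree (r : ℕ) (U : ℝ → ℝ → ℝ) : Prop :=
  ∀ᵐ x ∂(MeasureTheory.volume.restrict (Set.univ.pi fun _ : Fin r => Set.Icc (0:ℝ) 1)),
    (∏ i : Fin r, ∏ j : Fin r, if i < j then U (x i) (x j) else 1) = 0

open Classical in
/-- The graphon `W^{(r,s)}`: equal to `1/2` off the diagonal blocks, `1` on the first `s`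
diagonal blocks `I_i × I_i`, and `0` on the remaining diagonal blocks. -/
def Wrs (r s : ℕ) : ℝ → ℝ → ℝ := fun x y =>
  if ∃ i j : Fin r, i ≠ j ∧ x ∈ Set.Ioc (((i:ℕ):ℝ)/r) ((((i:ℕ):ℝ)+1)/r) ∧
      y ∈ Set.Ioc (((j:ℕ):ℝ)/r) ((((j:ℕ):ℝ)+1)/r)
  then 1/2
  else if ∃ i : Fin r, (i:ℕ) < s ∧ x ∈ Set.Ioc (((i:ℕ):ℝ)/r) ((((i:ℕ):ℝ)+1)/r) ∧
      y ∈ Set.Ioc (((i:ℕ):ℝ)/r) ((((i:ℕ):ℝ)+1)/r)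
  then 1 else 0

/-- `E_r = ⋃_{i ≠ j} I_i × I_j` where `I_i`, `i = 1, …, r`, are the consecutive
intervals of length `1/r` in `[0,1]`. -/
def Er (r : ℕ) : Set (ℝ × ℝ) :=
  ⋃ (i : Fin r) (j : Fin r) (_ : i ≠ j),
    (Set.Ioc (((i:ℕ):ℝ)/r) ((((i:ℕ):ℝ)+1)/r)) ×ˢ (Set.Ioc (((j:ℕ):ℝ)/r) ((((j:ℕ):ℝ)+1)/r))

/-- `R_r`: the set of graphons equal to `1/2` on `E_r` and `{0,1}`-valued elsewhere
on `[0,1]²`. -/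
def Rset (r : ℕ) : Set (ℝ → ℝ → ℝ) :=
  { W | IsGraphon W ∧ (∀ p ∈ Er r, W p.1 p.2 = 1/2) ∧
      ∀ p ∈ ((Set.Icc (0:ℝ) 1) ×ˢ (Set.Icc (0:ℝ) 1)) \ Er r,
        W p.1 p.2 = 0 ∨ W p.1 p.2 = 1 }

/-- A graphon is random-free if it is `{0,1}`-valued a.e. on `[0,1]²`. -/
def IsRandomFree (W : ℝ → ℝ → ℝ) : Prop :=
  ∀ᵐ p ∂(MeasureTheory.volume.restrict ((Set.Icc (0:ℝ) 1) ×ˢ (Set.Icc (0:ℝ) 1))),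
    W (Prod.fst p) (Prod.snd p) = 0 ∨ W (Prod.fst p) (Prod.snd p) = 1

/-!
Colour the vertices of a graph `G` on `n` vertices with `K` colours and let `t * n ^ 2` be the total
binary entropy of the block densities. Maximum likelihood with respect to these densities shows that
at most `K ^ n * (n ^ 2 + 1) ^ (K ^ 2) * 2 ^ (t * n ^ 2 / 2)` graphs have a colouring with this `t`
or less. Hence a family of `2 ^ ((c - o(1)) * n ^ 2 / 2)` graphs contains, for every fixed `K`,
graphs all of whose `K`-colourings have `t > c - o(1)`. Apply this to the colourings obtained by
greedily splitting along rectangles of maximal discrepancy, which are weakly regular. With the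
vertices sorted by colour, their step kernels are determined by finitely many monotone thresholds
and densities; Helly selection and the `L²` convergence of the martingale of densities give a limit
graphon of entropy at least `c`.

If graphs at distance more than `ε` from `W_Q` were not negligible in `Q`, this would apply to them
with `c = Ent(W_Q)`: their limit has maximal entropy, so it is `W_Q`, a contradiction.
-/

section FiberAverage

open scoped BigOperators

variable {Ω Γ Δ : Type*} [Fintype Ω] [DecidableEq Γ] [DecidableEq Δ]

/-- The average of `f` over the fibre of `q` above `g` (`0` if that fibre is empty). -/
def fiberAvg (q : Ω → Γ) (f : Ω → ℝ) (g : Γ) : ℝ :=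
  𝔼 w with q w = g, f w

lemma sum_fiberAvg_mul (q : Ω → Γ) (f : Ω → ℝ) (F : Γ → ℝ) :
    ∑ w, fiberAvg q f (q w) * F (q w) = ∑ w, f w * F (q w) := by
  rw [Finset.sum_comp (fun g => fiberAvg q f g * F g) q,
    ← Finset.sum_fiberwise_of_maps_to fun w _ => Finset.mem_image_of_mem q (Finset.mem_univ w)]
  refine Finset.sum_congr rfl fun g _ => ?_
  rw [← smul_mul_assoc, fiberAvg, Finset.card_smul_expect, Finset.sum_mul]
  exact Finset.sum_congr rfl fun w hw => by rw [(Finset.mem_filter.1 hw).2]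

lemma fiberAvg_mem_Icc (q : Ω → Γ) {f : Ω → ℝ} (hf : ∀ w, f w ∈ Icc (0 : ℝ) 1) (g : Γ) :
    fiberAvg q f g ∈ Icc (0 : ℝ) 1 := by
  rcases (Finset.univ.filter fun w => q w = g).eq_empty_or_nonempty with h | h
  · simp [fiberAvg, h]
  · exact ⟨Finset.expect_nonneg fun w _ => (hf w).1, Finset.expect_le h fun w _ => (hf w).2⟩

lemma fiberAvg_pos (q : Ω → Γ) {f : Ω → ℝ} (hf : ∀ w, 0 ≤ f w) {w : Ω} (hw : 0 < f w) :
    0 < fiberAvg q f (q w) :=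
  Finset.expect_pos' (fun w _ => hf w) ⟨w, by simp, hw⟩

lemma fiberAvg_one_sub (q : Ω → Γ) (f : Ω → ℝ) (w : Ω) :
    fiberAvg q (fun w => 1 - f w) (q w) = 1 - fiberAvg q f (q w) := by
  have hne : (Finset.univ.filter fun w' => q w' = q w).Nonempty := ⟨w, by simp⟩
  rw [fiberAvg, Finset.expect_sub_distrib, Finset.expect_const hne, fiberAvg]

lemma fiberAvg_equiv {q : Ω → Γ} {f : Ω → ℝ} (e : Ω ≃ Ω) (d : Γ ≃ Γ)
    (hq : ∀ w, q (e w) = d (q w)) (hf : ∀ w, f (e w) = f w) (g : Γ) :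
    fiberAvg q f (d g) = fiberAvg q f g :=
  (Finset.expect_equiv e (fun w => by simp [hq]) fun w _ => (hf w).symm).symm

/-- Pythagoras: averaging over a finer partition first makes the difference of the two averages
orthogonal to the coarser one. -/
lemma sum_sq_fiberAvg_sub (q' : Ω → Δ) (r : Δ → Γ) (f : Ω → ℝ) :
    ∑ w, (fiberAvg q' f (q' w) - fiberAvg (r ∘ q') f (r (q' w))) ^ 2
      = ∑ w, fiberAvg q' f (q' w) ^ 2 - ∑ w, fiberAvg (r ∘ q') f (r (q' w)) ^ 2 := by
  have hfine := sum_fiberAvg_mul q' f fun d => fiberAvg (r ∘ q') f (r d)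
  have hcoarse := sum_fiberAvg_mul (r ∘ q') f fun g => fiberAvg (r ∘ q') f g
  simp only [Function.comp_apply] at hcoarse
  have horth := hfine.trans hcoarse.symm
  simp only [sub_sq, Finset.sum_add_distrib, Finset.sum_sub_distrib, mul_assoc, ← Finset.mul_sum,
    horth]
  simp only [pow_two]
  ring

end FiberAverage

section WeakRegularity

variable {V Γ : Type*} [Fintype V] [DecidableEq Γ]

/-- The block density at a pair of colours: the average of the kernel `f` over the pairs of vertices
with these colours. -/
def blockDensity (f : V × V → ℝ) (c : V → Γ) : Γ × Γ → ℝ :=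
  fiberAvg (Prod.map c c) f

/-- The step kernel obtained from `f` by averaging over the blocks of the colouring `c`. -/
def blockAvg (f : V × V → ℝ) (c : V → Γ) (w : V × V) : ℝ :=
  blockDensity f c (Prod.map c c w)

lemma blockDensity_mem_Icc {f : V × V → ℝ} (hf : ∀ w, f w ∈ Icc (0 : ℝ) 1) (c : V → Γ)
    (p : Γ × Γ) : blockDensity f c p ∈ Icc (0 : ℝ) 1 :=
  fiberAvg_mem_Icc _ hf p

lemma blockDensity_swap {f : V × V → ℝ} (hf : ∀ w, f w.swap = f w) (c : V → Γ) (p : Γ × Γ) :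
    blockDensity f c p.swap = blockDensity f c p :=
  fiberAvg_equiv (Equiv.prodComm V V) (Equiv.prodComm Γ Γ) (fun _ => rfl) hf p

lemma sum_sq_blockAvg_sub (f : V × V → ℝ) {Δ : Type*} [DecidableEq Δ] (c' : V → Δ) (r : Δ → Γ) :
    ∑ w, (blockAvg f c' w - blockAvg f (r ∘ c') w) ^ 2
      = ∑ w, blockAvg f c' w ^ 2 - ∑ w, blockAvg f (r ∘ c') w ^ 2 :=
  sum_sq_fiberAvg_sub (Prod.map c' c') (Prod.map r r) f

lemma blockAvg_comp_of_injective (f : V × V → ℝ) {Δ : Type*} [DecidableEq Δ] (c : V → Γ)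
    {r : Γ → Δ} (hr : Function.Injective r) : blockAvg f (r ∘ c) = blockAvg f c := by
  funext w
  simp only [blockAvg, blockDensity, fiberAvg, Prod.ext_iff, Prod.map_fst, Prod.map_snd,
    Function.comp_apply, hr.eq_iff]

lemma sum_sq_blockAvg_le {f : V × V → ℝ} (hf : ∀ w, f w ∈ Icc (0 : ℝ) 1) (c : V → Γ) :
    ∑ w, blockAvg f c w ^ 2 ≤ (Fintype.card V : ℝ) ^ 2 := by
  calc ∑ w, blockAvg f c w ^ 2 ≤ ∑ _w : V × V, (1 : ℝ) := by
        gcongr with w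
        have hw := blockDensity_mem_Icc hf c (Prod.map c c w)
        exact pow_le_one₀ hw.1 hw.2
    _ = (Fintype.card V : ℝ) ^ 2 := by simp [pow_two]

/-- The discrepancy between `f` and its block averages on the rectangle `R.1 × R.2`. -/
def blockDiscrepancy (f : V × V → ℝ) (c : V → Γ) (R : Finset V × Finset V) : ℝ :=
  |∑ w ∈ R.1 ×ˢ R.2, (f w - blockAvg f c w)|

/-- A rectangle of maximal discrepancy. -/
def worstRectangle (f : V × V → ℝ) (c : V → Γ) : Finset V × Finset V :=
  (Finite.exists_max (blockDiscrepancy f c)).choose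

lemma blockDiscrepancy_le_worstRectangle (f : V × V → ℝ) (c : V → Γ) (R : Finset V × Finset V) :
    blockDiscrepancy f c R ≤ blockDiscrepancy f c (worstRectangle f c) :=
  (Finite.exists_max (blockDiscrepancy f c)).choose_spec R

variable [DecidableEq V]

/-- The refinement of `c` by both sides of its worst rectangle; the two lowest binary digits of the
new colour record membership in the sides, the remaining digits are the old colour. -/
def splitWorst (f : V × V → ℝ) (c : V → ℕ) (v : V) : ℕ :=
  4 * c v + ((if v ∈ (worstRectangle f c).1 then 2 else 0)
    + if v ∈ (worstRectangle f c).2 then 1 else 0)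

/-- The colourings obtained from the trivial one by repeatedly splitting the worst rectangle. -/
def greedyColoring (f : V × V → ℝ) : ℕ → V → ℕ
  | 0 => fun _ => 0
  | j + 1 => splitWorst f (greedyColoring f j)

lemma splitWorst_div_four (f : V × V → ℝ) (c : V → ℕ) (v : V) : splitWorst f c v / 4 = c v := by
  unfold splitWorst; split_ifs <;> omega

lemma mem_worstRectangle_fst_iff (f : V × V → ℝ) (c : V → ℕ) (v : V) :
    v ∈ (worstRectangle f c).1 ↔ 2 ≤ splitWorst f c v % 4 := by
  unfold splitWorst; split_ifs <;> simp_all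

lemma mem_worstRectangle_snd_iff (f : V × V → ℝ) (c : V → ℕ) (v : V) :
    v ∈ (worstRectangle f c).2 ↔ splitWorst f c v % 2 = 1 := by
  unfold splitWorst; split_ifs <;> simp_all <;> omega

lemma greedyColoring_lt (f : V × V → ℝ) (j : ℕ) (v : V) : greedyColoring f j v < 4 ^ j := by
  induction j with
  | zero => simp [greedyColoring]
  | succ j ih =>
    have hdiv := splitWorst_div_four f (greedyColoring f j) v
    simp only [greedyColoring, pow_succ]
    omega

lemma greedyColoring_add_div (f : V × V → ℝ) (j i : ℕ) (v : V) :
    greedyColoring f (j + i) v / 4 ^ i = greedyColoring f j v := by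
  induction i with
  | zero => simp
  | succ i ih =>
    rw [pow_succ', ← Nat.div_div_eq_div_mul, ← add_assoc]
    simpa only [greedyColoring, splitWorst_div_four] using ih

lemma sum_sq_blockAvg_greedyColoring_sub (f : V × V → ℝ) {j k : ℕ} (hjk : j ≤ k) :
    ∑ w, (blockAvg f (greedyColoring f k) w - blockAvg f (greedyColoring f j) w) ^ 2
      = ∑ w, blockAvg f (greedyColoring f k) w ^ 2
        - ∑ w, blockAvg f (greedyColoring f j) w ^ 2 := by
  obtain ⟨i, rfl⟩ := Nat.exists_eq_add_of_le hjk
  have hcoarse : (fun a => a / 4 ^ i) ∘ greedyColoring f (j + i) = greedyColoring f j :=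
    funext (greedyColoring_add_div f j i)
  simpa only [hcoarse] using sum_sq_blockAvg_sub f (greedyColoring f (j + i)) fun a => a / 4 ^ i

lemma sum_worstRectangle_splitWorst (f : V × V → ℝ) (c : V → ℕ) :
    ∑ w ∈ (worstRectangle f c).1 ×ˢ (worstRectangle f c).2, blockAvg f (splitWorst f c) w
      = ∑ w ∈ (worstRectangle f c).1 ×ˢ (worstRectangle f c).2, f w := by
  let indicator : ℕ × ℕ → ℝ := fun p => if 2 ≤ p.1 % 4 ∧ p.2 % 2 = 1 then 1 else 0
  have sum_eq : ∀ g : V × V → ℝ,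
      ∑ w ∈ (worstRectangle f c).1 ×ˢ (worstRectangle f c).2, g w
        = ∑ w, g w * indicator (Prod.map (splitWorst f c) (splitWorst f c) w) := by
    intro g
    simp only [indicator, mul_ite, mul_one, mul_zero, ← Finset.sum_filter]
    refine Finset.sum_congr (Finset.ext fun w => ?_) fun _ _ => rfl
    simp [mem_worstRectangle_fst_iff, mem_worstRectangle_snd_iff]
  rw [sum_eq, sum_eq]
  exact sum_fiberAvg_mul _ _ _

lemma sq_blockDiscrepancy_worstRectangle_le (f : V × V → ℝ) (c : V → ℕ) :
    blockDiscrepancy f c (worstRectangle f c) ^ 2 ≤ (Fintype.card V : ℝ) ^ 2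
      * (∑ w, blockAvg f (splitWorst f c) w ^ 2 - ∑ w, blockAvg f c w ^ 2) := by
  have hcoarse : (fun a => a / 4) ∘ splitWorst f c = c := funext (splitWorst_div_four f c)
  have henergy := sum_sq_blockAvg_sub f (splitWorst f c) fun a => a / 4
  rw [hcoarse] at henergy
  have hcard : (((worstRectangle f c).1 ×ˢ (worstRectangle f c).2).card : ℝ)
      ≤ (Fintype.card V : ℝ) ^ 2 := by
    rw [pow_two]
    exact_mod_cast Fintype.card_prod V V ▸ Finset.card_le_univ _
  rw [← henergy, blockDiscrepancy, sq_abs, Finset.sum_sub_distrib,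
    ← sum_worstRectangle_splitWorst, ← Finset.sum_sub_distrib]
  refine sq_sum_le_card_mul_sum_sq.trans (mul_le_mul hcard ?_ (by positivity) (by positivity))
  exact Finset.sum_le_sum_of_subset_of_nonneg (Finset.subset_univ _) fun _ _ _ => sq_nonneg _

/-- The normalised maximal discrepancy left by the `j`-th greedy colouring. -/
def greedyResidual (f : V × V → ℝ) (j : ℕ) : ℝ :=
  blockDiscrepancy f (greedyColoring f j) (worstRectangle f (greedyColoring f j))
    / (Fintype.card V : ℝ) ^ 2

lemma greedyResidual_nonneg (f : V × V → ℝ) (j : ℕ) : 0 ≤ greedyResidual f j :=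
  div_nonneg (abs_nonneg _) (sq_nonneg _)

lemma abs_sum_sub_blockAvg_greedyColoring_le (f : V × V → ℝ) (j : ℕ) (S T : Finset V) :
    |∑ w ∈ S ×ˢ T, (f w - blockAvg f (greedyColoring f j) w)|
      ≤ greedyResidual f j * (Fintype.card V : ℝ) ^ 2 := by
  rcases isEmpty_or_nonempty V with _ | _
  · simp [Subsingleton.elim (S ×ˢ T) ∅]
  · rw [greedyResidual, div_mul_cancel₀ _ (by positivity)]
    exact blockDiscrepancy_le_worstRectangle f _ (S, T)

lemma sum_sq_greedyResidual_le_one {f : V × V → ℝ} (hf : ∀ w, f w ∈ Icc (0 : ℝ) 1) (J : ℕ) :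
    ∑ j ∈ Finset.range J, greedyResidual f j ^ 2 ≤ 1 := by
  rcases isEmpty_or_nonempty V with _ | _
  · simp [greedyResidual]
  set energy : ℕ → ℝ := fun j => ∑ w, blockAvg f (greedyColoring f j) w ^ 2
  have hincrement : ∀ j, greedyResidual f j ^ 2
      ≤ (energy (j + 1) - energy j) / (Fintype.card V : ℝ) ^ 2 := fun j => by
    have hsplit := sq_blockDiscrepancy_worstRectangle_le f (greedyColoring f j)
    rw [greedyResidual, div_pow, div_le_div_iff₀ (by positivity) (by positivity)]
    calc _ ≤ ((Fintype.card V : ℝ) ^ 2 * (energy (j + 1) - energy j))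
          * (Fintype.card V : ℝ) ^ 2 := mul_le_mul_of_nonneg_right hsplit (by positivity)
      _ = _ := by ring
  calc ∑ j ∈ Finset.range J, greedyResidual f j ^ 2
      ≤ ∑ j ∈ Finset.range J, (energy (j + 1) - energy j) / (Fintype.card V : ℝ) ^ 2 :=
        Finset.sum_le_sum fun j _ => hincrement j
    _ = (energy J - energy 0) / (Fintype.card V : ℝ) ^ 2 := by
        rw [← Finset.sum_div, Finset.sum_range_sub]
    _ ≤ 1 := by
        have hle := sum_sq_blockAvg_le hf (greedyColoring f J)
        have hnonneg : 0 ≤ energy 0 := Finset.sum_nonneg fun _ _ => sq_nonneg _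
        rw [div_le_one (by positivity)]
        linarith

lemma greedyResidual_le_one {f : V × V → ℝ} (hf : ∀ w, f w ∈ Icc (0 : ℝ) 1) (j : ℕ) :
    greedyResidual f j ≤ 1 := by
  refine (sq_le_one_iff₀ (greedyResidual_nonneg f j)).1
    (le_trans ?_ (sum_sq_greedyResidual_le_one hf (j + 1)))
  exact Finset.single_le_sum (f := fun j => greedyResidual f j ^ 2) (fun _ _ => sq_nonneg _)
    (Finset.self_mem_range_succ j)

end WeakRegularity

section Counting

variable {V Γ : Type*}

open Classical in
/-- The adjacency relation of `G` as a `{0, 1}`-valued kernel. -/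
def adjKernel (G : SimpleGraph V) (w : V × V) : ℝ :=
  if G.Adj w.1 w.2 then 1 else 0

open Classical in
/-- The probability that a pair which is an edge with probability `p w` agrees with `G`. -/
def edgeLikelihood (p : V × V → ℝ) (G : SimpleGraph V) (w : V × V) : ℝ :=
  if G.Adj w.1 w.2 then p w else 1 - p w

lemma adjKernel_mem_Icc (G : SimpleGraph V) (w : V × V) : adjKernel G w ∈ Icc (0 : ℝ) 1 := by
  unfold adjKernel; split_ifs <;> simp

lemma adjKernel_swap (G : SimpleGraph V) (w : V × V) : adjKernel G w.swap = adjKernel G w := by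
  rw [adjKernel, adjKernel, Prod.fst_swap, Prod.snd_swap, G.adj_comm]

lemma edgeLikelihood_mem_Icc {p : V × V → ℝ} (hp : ∀ w, p w ∈ Icc (0 : ℝ) 1)
    (G : SimpleGraph V) (w : V × V) : edgeLikelihood p G w ∈ Icc (0 : ℝ) 1 := by
  unfold edgeLikelihood
  split_ifs
  · exact hp w
  · exact Icc.mem_iff_one_sub_mem.1 (hp w)

variable [Fintype V] [DecidableEq Γ]

/-- The total binary entropy of the block densities of `f`, summed over all pairs of vertices. -/
def blockEntropy (f : V × V → ℝ) (c : V → Γ) : ℝ :=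
  ∑ w, binEnt (blockAvg f c w)

lemma blockEntropy_comp_of_injective (f : V × V → ℝ) {Δ : Type*} [DecidableEq Δ] (c : V → Γ)
    {r : Γ → Δ} (hr : Function.Injective r) : blockEntropy f (r ∘ c) = blockEntropy f c := by
  simp only [blockEntropy, blockAvg_comp_of_injective f c hr]

lemma edgeLikelihood_blockAvg_pos (G : SimpleGraph V) (c : V → Γ) (w : V × V) :
    0 < edgeLikelihood (blockAvg (adjKernel G) c) G w := by
  unfold edgeLikelihood
  split_ifs with h
  · exact fiberAvg_pos _ (fun w => (adjKernel_mem_Icc G w).1) (by simp [adjKernel, h])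
  · rw [blockAvg, blockDensity, ← fiberAvg_one_sub]
    exact fiberAvg_pos _ (fun w => sub_nonneg.2 (adjKernel_mem_Icc G w).2) (by simp [adjKernel, h])

lemma edgeLikelihood_blockAvg_swap (G : SimpleGraph V) (c : V → Γ) (w : V × V) :
    edgeLikelihood (blockAvg (adjKernel G) c) G w.swap
      = edgeLikelihood (blockAvg (adjKernel G) c) G w := by
  have hp : blockAvg (adjKernel G) c w.swap = blockAvg (adjKernel G) c w :=
    blockDensity_swap (adjKernel_swap G) c (Prod.map c c w)
  rw [edgeLikelihood, edgeLikelihood, hp, Prod.fst_swap, Prod.snd_swap, G.adj_comm]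

lemma sum_logb_edgeLikelihood_blockAvg (G : SimpleGraph V) (c : V → Γ) :
    ∑ w, Real.logb 2 (edgeLikelihood (blockAvg (adjKernel G) c) G w)
      = -blockEntropy (adjKernel G) c := by
  set p := blockAvg (adjKernel G) c
  have hpoint : ∀ w, Real.logb 2 (edgeLikelihood p G w) = adjKernel G w * Real.logb 2 (p w)
      + (Real.logb 2 (1 - p w) - adjKernel G w * Real.logb 2 (1 - p w)) := fun w => by
    by_cases h : G.Adj w.1 w.2 <;> simp [edgeLikelihood, adjKernel, h]
  have havg (F : ℝ → ℝ) : ∑ w, adjKernel G w * F (p w) = ∑ w, p w * F (p w) :=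
    (sum_fiberAvg_mul (Prod.map c c) (adjKernel G)
      fun g => F (blockDensity (adjKernel G) c g)).symm
  have hone := havg (Real.logb 2)
  have hzero := havg fun x => Real.logb 2 (1 - x)
  simp only [hpoint, Finset.sum_add_distrib, Finset.sum_sub_distrib, hone, hzero, blockEntropy,
    binEnt, sub_mul, one_mul, neg_mul, Finset.sum_neg_distrib, p]
  ring

open Classical in
/-- The number of edges of `G` in each block of the colouring `c`, counted as ordered pairs. -/
def blockEdgeCount (c : V → Γ) (G : SimpleGraph V) (g : Γ × Γ) :
    Fin (Fintype.card V ^ 2 + 1) :=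
  ⟨(Finset.univ.filter fun w : V × V => Prod.map c c w = g ∧ G.Adj w.1 w.2).card, by
    rw [Nat.lt_succ_iff, pow_two, ← Fintype.card_prod]
    exact Finset.card_le_univ _⟩

lemma blockDensity_eq_of_blockEdgeCount_eq {c : V → Γ} {G H : SimpleGraph V}
    (h : blockEdgeCount c G = blockEdgeCount c H) :
    blockDensity (adjKernel G) c = blockDensity (adjKernel H) c := by
  have hdensity : ∀ (F : SimpleGraph V) (g : Γ × Γ), blockDensity (adjKernel F) c g
      = blockEdgeCount c F g / (Finset.univ.filter fun w => Prod.map c c w = g).card := by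
    intro F g
    rw [blockDensity, fiberAvg, Finset.expect_eq_sum_div_card]
    simp only [blockEdgeCount, adjKernel, ← Finset.sum_filter, Finset.filter_filter,
      Finset.sum_const, nsmul_one]
  exact funext fun g => by rw [hdensity, hdensity, h]

variable [LinearOrder V]

/-- The probability that the random graph with independent edges of probabilities `p` is `G`. -/
def graphLikelihood (p : V × V → ℝ) (G : SimpleGraph V) : ℝ :=
  ∏ w with w.1 < w.2, edgeLikelihood p G w

lemma sum_le_two_mul_sum_lt {f : V × V → ℝ} (hf : ∀ w, f w ≤ 0) (hswap : ∀ w, f w.swap = f w) :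
    ∑ w, f w ≤ 2 * ∑ w with w.1 < w.2, f w := by
  have hlower : ∑ w with w.2 < w.1, f w = ∑ w with w.1 < w.2, f w :=
    Finset.sum_equiv (Equiv.prodComm V V) (by simp) fun w _ => (hswap w).symm
  rw [two_mul]
  nth_rewrite 1 [← hlower]
  rw [Finset.sum_filter, Finset.sum_filter, ← Finset.sum_add_distrib]
  gcongr with w
  rcases lt_trichotomy w.1 w.2 with h | h | h
  · simp [h, h.not_gt]
  · simp [h, hf w]
  · simp [h, h.not_gt]

lemma rpow_neg_blockEntropy_le_graphLikelihood (G : SimpleGraph V) (c : V → Γ) :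
    (2 : ℝ) ^ (-blockEntropy (adjKernel G) c / 2)
      ≤ graphLikelihood (blockAvg (adjKernel G) c) G := by
  set l := edgeLikelihood (blockAvg (adjKernel G) c) G
  have hpos : ∀ w, 0 < l w := edgeLikelihood_blockAvg_pos G c
  have hlog : ∀ w, Real.logb 2 (l w) ≤ 0 := fun w =>
    Real.logb_nonpos one_lt_two (hpos w).le
      (edgeLikelihood_mem_Icc (fun _ => blockDensity_mem_Icc (adjKernel_mem_Icc G) c _) G w).2
  have hhalf := sum_le_two_mul_sum_lt hlog fun w =>
    congrArg (Real.logb 2) (edgeLikelihood_blockAvg_swap G c w)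
  rw [sum_logb_edgeLikelihood_blockAvg] at hhalf
  rw [graphLikelihood, ← Real.le_logb_iff_rpow_le one_lt_two (Finset.prod_pos fun w _ => hpos w),
    Real.logb_prod _ _ fun w _ => (hpos w).ne']
  linarith

lemma sum_graphLikelihood_le_one {p : V × V → ℝ} (hp : ∀ w, p w ∈ Icc (0 : ℝ) 1)
    (s : Finset (SimpleGraph V)) : ∑ G ∈ s, graphLikelihood p G ≤ 1 := by
  classical
  let pairs : Finset (V × V) := Finset.univ.filter fun w => w.1 < w.2
  let edges : SimpleGraph V → Finset (V × V) := fun G => pairs.filter fun w => G.Adj w.1 w.2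
  let weight : Finset (V × V) → ℝ := fun t => (∏ w ∈ t, p w) * ∏ w ∈ pairs \ t, (1 - p w)
  have hedges : Function.Injective edges := fun G H h => by
    have hlt : ∀ u v, u < v → (G.Adj u v ↔ H.Adj u v) := fun u v huv => by
      simpa [edges, pairs, huv] using Finset.ext_iff.1 h (u, v)
    ext u v
    rcases lt_trichotomy u v with huv | rfl | huv
    · exact hlt u v huv
    · simp
    · rw [G.adj_comm, H.adj_comm, hlt v u huv]
  have hweight : ∀ G, graphLikelihood p G = weight (edges G) := fun G => by
    simp only [graphLikelihood, edgeLikelihood, Finset.prod_ite, weight, edges,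
      Finset.filter_not, pairs]
  calc ∑ G ∈ s, graphLikelihood p G = ∑ t ∈ s.image edges, weight t := by
        rw [Finset.sum_image hedges.injOn]
        exact Finset.sum_congr rfl fun G _ => hweight G
    _ ≤ ∑ t ∈ pairs.powerset, weight t := by
        refine Finset.sum_le_sum_of_subset_of_nonneg (fun t ht => ?_) fun t _ _ =>
          mul_nonneg (Finset.prod_nonneg fun w _ => (hp w).1)
            (Finset.prod_nonneg fun w _ => sub_nonneg.2 (hp w).2)
        obtain ⟨G, -, rfl⟩ := Finset.mem_image.1 ht
        exact Finset.mem_powerset.2 (Finset.filter_subset _ _)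
    _ = ∏ w ∈ pairs, (p w + (1 - p w)) := (Finset.prod_add _ _ _).symm
    _ = 1 := by simp

lemma card_le_of_blockEdgeCount_eq {s : Finset (SimpleGraph V)} {c : V → Γ}
    {e : Γ × Γ → Fin (Fintype.card V ^ 2 + 1)} {t : ℝ}
    (hs : ∀ G ∈ s, blockEdgeCount c G = e ∧ blockEntropy (adjKernel G) c ≤ t) :
    (s.card : ℝ) ≤ 2 ^ (t / 2) := by
  rcases s.eq_empty_or_nonempty with rfl | ⟨G₀, hG₀⟩
  · simp only [Finset.card_empty, Nat.cast_zero]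
    positivity
  have hlower : ∀ G ∈ s, (2 : ℝ) ^ (-t / 2) ≤ graphLikelihood (blockAvg (adjKernel G₀) c) G := by
    intro G hG
    have hblock : blockAvg (adjKernel G₀) c = blockAvg (adjKernel G) c := funext fun w =>
      congrFun (blockDensity_eq_of_blockEdgeCount_eq ((hs G₀ hG₀).1.trans (hs G hG).1.symm)) _
    rw [hblock]
    refine le_trans ?_ (rpow_neg_blockEntropy_le_graphLikelihood G c)
    gcongr
    · exact one_le_two
    · exact (hs G hG).2
  have hsum := (Finset.card_nsmul_le_sum s _ _ hlower).trans (sum_graphLikelihood_le_one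
    (fun w => blockDensity_mem_Icc (adjKernel_mem_Icc G₀) c (Prod.map c c w)) s)
  rwa [nsmul_eq_mul, neg_div, Real.rpow_neg zero_le_two, ← div_eq_mul_inv,
    div_le_one (by positivity)] at hsum

variable [Fintype Γ]

lemma card_exists_blockEntropy_le (t : ℝ) :
    (Nat.card {G : SimpleGraph V // ∃ c : V → Γ, blockEntropy (adjKernel G) c ≤ t} : ℝ)
      ≤ (Fintype.card Γ : ℝ) ^ Fintype.card V
        * ((Fintype.card V : ℝ) ^ 2 + 1) ^ (Fintype.card Γ ^ 2) * 2 ^ (t / 2) := by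
  classical
  let family : (V → Γ) × (Γ × Γ → Fin (Fintype.card V ^ 2 + 1)) → Finset (SimpleGraph V) :=
    fun x => Finset.univ.filter fun G =>
      blockEdgeCount x.1 G = x.2 ∧ blockEntropy (adjKernel G) x.1 ≤ t
  have hcover : Nat.card {G : SimpleGraph V // ∃ c : V → Γ, blockEntropy (adjKernel G) c ≤ t}
      ≤ ∑ x, (family x).card := by
    rw [Nat.card_eq_fintype_card, Fintype.card_subtype]
    refine (Finset.card_le_card fun G hG => ?_).trans (Finset.card_biUnion_le (s := Finset.univ))
    obtain ⟨c, hc⟩ := (Finset.mem_filter.1 hG).2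
    exact Finset.mem_biUnion.2 ⟨(c, blockEdgeCount c G), Finset.mem_univ _, by simp [family, hc]⟩
  calc _ ≤ ((∑ x, (family x).card : ℕ) : ℝ) := by exact_mod_cast hcover
    _ ≤ ∑ _x : (V → Γ) × (Γ × Γ → Fin (Fintype.card V ^ 2 + 1)), (2 : ℝ) ^ (t / 2) := by
        push_cast
        exact Finset.sum_le_sum fun x _ =>
          card_le_of_blockEdgeCount_eq fun G hG => (Finset.mem_filter.1 hG).2
    _ = _ := by simp [pow_two]

end Counting

section Asymptotics

lemma eventually_card_bound_lt (K : ℕ) {a b : ℝ} (hab : a < b) :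
    ∀ᶠ n : ℕ in atTop, (K : ℝ) ^ n * ((n : ℝ) ^ 2 + 1) ^ (K ^ 2) * 2 ^ (a * n ^ 2 / 2)
      < (2 : ℝ) ^ (b * choose2 n) := by
  have hlarge : ∀ᶠ n : ℕ in atTop, (2 * K + 4 * (K : ℝ) ^ 2 + b) / (b - a) < n :=
    tendsto_natCast_atTop_atTop.eventually_gt_atTop _
  filter_upwards [hlarge, eventually_gt_atTop 0] with n hn hn0
  have hK : (K : ℝ) ^ n ≤ 2 ^ ((K : ℝ) * n) := by
    rw [Real.rpow_mul_natCast zero_le_two, Real.rpow_natCast]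
    gcongr
    exact_mod_cast K.lt_two_pow_self.le
  have hpoly : ((n : ℝ) ^ 2 + 1) ^ (K ^ 2) ≤ 2 ^ (2 * (K : ℝ) ^ 2 * n) := by
    have hbase : (n : ℝ) ^ 2 + 1 ≤ (2 ^ n) ^ 2 := by
      have h : (n : ℝ) + 1 ≤ 2 ^ n := by exact_mod_cast n.lt_two_pow_self
      nlinarith
    calc ((n : ℝ) ^ 2 + 1) ^ (K ^ 2) ≤ ((2 ^ n) ^ 2) ^ (K ^ 2) := by gcongr
      _ = (2 : ℝ) ^ ((n * 2 * K ^ 2 : ℕ) : ℝ) := by rw [Real.rpow_natCast, pow_mul, pow_mul]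
      _ = 2 ^ (2 * (K : ℝ) ^ 2 * n) := by push_cast; ring_nf
  calc (K : ℝ) ^ n * ((n : ℝ) ^ 2 + 1) ^ (K ^ 2) * 2 ^ (a * n ^ 2 / 2)
      ≤ 2 ^ ((K : ℝ) * n) * 2 ^ (2 * (K : ℝ) ^ 2 * n) * 2 ^ (a * n ^ 2 / 2) := by gcongr
    _ = (2 : ℝ) ^ (K * n + 2 * (K : ℝ) ^ 2 * n + a * n ^ 2 / 2) := by
        rw [Real.rpow_add two_pos, Real.rpow_add two_pos]
    _ < (2 : ℝ) ^ (b * choose2 n) := by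
        rw [div_lt_iff₀ (sub_pos.2 hab)] at hn
        refine Real.rpow_lt_rpow_of_exponent_lt one_lt_two ?_
        rw [choose2]
        nlinarith [mul_lt_mul_of_pos_right hn (Nat.cast_pos (α := ℝ).2 hn0)]

lemma frequently_exists_forall_lt_blockEntropy {A : GraphClass} {a b : ℝ} (hab : a < b)
    (hA : ∃ᶠ n in atTop, (2 : ℝ) ^ (b * choose2 n) ≤ Nat.card (A n)) (Γ : Type*) [Finite Γ]
    [DecidableEq Γ] :
    ∃ᶠ n in atTop, ∃ G ∈ A n, ∀ c : Fin n → Γ, a * n ^ 2 < blockEntropy (adjKernel G) c := by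
  cases nonempty_fintype Γ
  refine (hA.and_eventually (eventually_card_bound_lt (Fintype.card Γ) hab)).mono fun n hn => ?_
  by_contra! hlow
  have hsub : Nat.card (A n) ≤ Nat.card {G : SimpleGraph (Fin n) //
      ∃ c : Fin n → Γ, blockEntropy (adjKernel G) c ≤ a * n ^ 2} :=
    Nat.card_mono (Set.toFinite _) hlow
  have hcount := card_exists_blockEntropy_le (V := Fin n) (Γ := Γ) (a * n ^ 2)
  rw [Fintype.card_fin] at hcount
  exact absurd ((hn.1.trans (Nat.cast_le.2 hsub)).trans hcount) hn.2.not_ge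

end Asymptotics

section UnitInterval

/-- Lebesgue measure on `[0, 1]`, as a measure on `ℝ`. -/
abbrev unitMeasure : Measure ℝ := volume.restrict (Icc (0 : ℝ) 1)

instance : IsProbabilityMeasure unitMeasure := ⟨by simp⟩

lemma ae_unitMeasure_mem_Ioc : ∀ᵐ x ∂unitMeasure, x ∈ Ioc (0 : ℝ) 1 := by
  rw [unitMeasure, ← restrict_Ioc_eq_restrict_Icc]
  exact ae_restrict_mem measurableSet_Ioc

lemma ae_unitMeasure_prod_mem_Ioc :
    ∀ᵐ p ∂unitMeasure.prod unitMeasure, p.1 ∈ Ioc (0 : ℝ) 1 ∧ p.2 ∈ Ioc (0 : ℝ) 1 :=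
  (Measure.quasiMeasurePreserving_fst.ae ae_unitMeasure_mem_Ioc).and
    (Measure.quasiMeasurePreserving_snd.ae ae_unitMeasure_mem_Ioc)

variable {n : ℕ}

variable (n) in
/-- The interval of `[0, 1]` which represents the vertex `v` in the graphon of a graph. -/
def cell (v : Fin n) : Set ℝ := Ioc ((v : ℝ) / n) (((v : ℝ) + 1) / n)

lemma mem_cell_iff {v : Fin n} {x : ℝ} : x ∈ cell n v ↔ ⌈(n : ℝ) * x⌉ = (v : ℤ) + 1 := by
  have hn : (0 : ℝ) < n := Nat.cast_pos.2 v.pos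
  rw [cell, mem_Ioc, div_lt_iff₀' hn, le_div_iff₀' hn, Int.ceil_eq_iff]
  push_cast
  rw [add_sub_cancel_right]

lemma cell_subset_Ioc (v : Fin n) : cell n v ⊆ Ioc 0 1 := by
  have hn : (0 : ℝ) < n := Nat.cast_pos.2 v.pos
  have hv : (v : ℝ) + 1 ≤ n := by exact_mod_cast v.2
  exact Ioc_subset_Ioc (by positivity) ((div_le_one hn).2 hv)

lemma preimage_add_const_cell (u v : Fin n) :
    (fun x => x + ((v : ℝ) - u) / n) ⁻¹' cell n v = cell n u := by
  rw [cell, preimage_add_const_Ioc, ← sub_div, ← sub_div, cell]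
  congr 2 <;> ring

variable [NeZero n]

variable (n) in
/-- The vertex whose cell contains `x`; meaningful for `x ∈ (0, 1]` only. -/
def vertexAt (x : ℝ) : Fin n := Fin.ofNat n (⌈(n : ℝ) * x⌉ - 1).toNat

variable (n) in
lemma measurable_vertexAt : Measurable (vertexAt n) :=
  (measurable_from_top (f := fun z : ℤ => Fin.ofNat n (z - 1).toNat)).comp
    (Int.measurable_ceil.comp (measurable_const.mul measurable_id))

lemma mem_cell_vertexAt {x : ℝ} (hx : x ∈ Ioc (0 : ℝ) 1) : x ∈ cell n (vertexAt n x) := by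
  have hn : (0 : ℝ) < n := Nat.cast_pos.2 (NeZero.pos n)
  have hpos : 0 < ⌈(n : ℝ) * x⌉ := Int.ceil_pos.2 (mul_pos hn hx.1)
  have hle : ⌈(n : ℝ) * x⌉ ≤ n :=
    Int.ceil_le.2 (by exact_mod_cast mul_le_of_le_one_right hn.le hx.2)
  have hval : (vertexAt n x : ℕ) = (⌈(n : ℝ) * x⌉ - 1).toNat := Nat.mod_eq_of_lt (by omega)
  rw [mem_cell_iff, hval]
  omega

lemma mem_cell_iff_vertexAt_eq {v : Fin n} {x : ℝ} (hx : x ∈ Ioc (0 : ℝ) 1) :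
    x ∈ cell n v ↔ vertexAt n x = v := by
  refine ⟨fun h => Fin.ext ?_, fun h => h ▸ mem_cell_vertexAt hx⟩
  have hceil := mem_cell_iff.1 (mem_cell_vertexAt (n := n) hx)
  rw [mem_cell_iff] at h
  omega

lemma vertexAt_eq_of_mem_cell {v : Fin n} {x : ℝ} (hx : x ∈ cell n v) : vertexAt n x = v :=
  (mem_cell_iff_vertexAt_eq (cell_subset_Ioc v hx)).1 hx

lemma monotoneOn_vertexAt : MonotoneOn (vertexAt n) (Ioc 0 1) := by
  intro x hx y hy hxy
  have hceil : ⌈(n : ℝ) * x⌉ ≤ ⌈(n : ℝ) * y⌉ := by gcongr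
  rw [mem_cell_iff.1 (mem_cell_vertexAt hx), mem_cell_iff.1 (mem_cell_vertexAt hy)] at hceil
  exact Fin.le_def.2 (by omega)

variable (n) in
lemma unitMeasure_eq_sum_restrict_cell : unitMeasure = ∑ v, volume.restrict (cell n v) := by
  have hunion : ⋃ v, cell n v = Ioc 0 1 := Subset.antisymm (iUnion_subset cell_subset_Ioc)
    fun x hx => mem_iUnion.2 ⟨_, mem_cell_vertexAt hx⟩
  have hdisjoint : Pairwise (Function.onFun Disjoint (cell n)) := fun u v huv =>
    disjoint_left.2 fun x hu hv =>
      huv ((vertexAt_eq_of_mem_cell hu).symm.trans (vertexAt_eq_of_mem_cell hv))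
  rw [unitMeasure, ← restrict_Ioc_eq_restrict_Icc, ← hunion,
    Measure.restrict_iUnion hdisjoint fun v => measurableSet_Ioc, Measure.sum_fintype]

variable (n) in
/-- The uniform probability measure on `Fin n`, as the image of Lebesgue measure. -/
def uniformMeasure : Measure (Fin n) := unitMeasure.map (vertexAt n)

instance : IsProbabilityMeasure (uniformMeasure n) :=
  Measure.isProbabilityMeasure_map (measurable_vertexAt n).aemeasurable

lemma measurePreserving_vertexAt : MeasurePreserving (vertexAt n) unitMeasure (uniformMeasure n) :=
  ⟨measurable_vertexAt n, rfl⟩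

lemma uniformMeasure_real_singleton (v : Fin n) : (uniformMeasure n).real {v} = 1 / n := by
  have hn : (0 : ℝ) < n := Nat.cast_pos.2 (NeZero.pos n)
  have hpre : vertexAt n ⁻¹' {v} =ᵐ[unitMeasure] cell n v := by
    filter_upwards [ae_unitMeasure_mem_Ioc] with x hx
    exact propext (mem_cell_iff_vertexAt_eq hx).symm
  rw [measureReal_def, uniformMeasure,
    Measure.map_apply (measurable_vertexAt n) (measurableSet_singleton v), measure_congr hpre,
    Measure.restrict_eq_self _ ((cell_subset_Ioc v).trans Ioc_subset_Icc_self), cell,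
    Real.volume_Ioc, ← sub_div, add_sub_cancel_left, ENNReal.toReal_ofReal (by positivity)]

lemma integral_uniformMeasure_prod (F : Fin n × Fin n → ℝ) :
    ∫ w, F w ∂(uniformMeasure n).prod (uniformMeasure n) = (∑ w, F w) / (n : ℝ) ^ 2 := by
  rw [integral_fintype Integrable.of_finite, Finset.sum_div]
  refine Finset.sum_congr rfl fun w _ => ?_
  rw [← Prod.mk.eta (p := w), ← singleton_prod_singleton, measureReal_prod_prod,
    uniformMeasure_real_singleton, uniformMeasure_real_singleton, smul_eq_mul]
  ring

lemma integral_comp_prodMap {φ : ℝ → Fin n}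
    (hφ : MeasurePreserving φ unitMeasure (uniformMeasure n)) (F : Fin n × Fin n → ℝ) :
    ∫ p, F (Prod.map φ φ p) ∂unitMeasure.prod unitMeasure = (∑ w, F w) / (n : ℝ) ^ 2 := by
  rw [← integral_uniformMeasure_prod, ← (hφ.prod hφ).map_eq,
    integral_map (hφ.prod hφ).measurable.aemeasurable
      (measurable_of_finite F).aestronglyMeasurable]

lemma graphonOfGraph_eq_adjKernel (G : SimpleGraph (Fin n)) {x y : ℝ} (hx : x ∈ Ioc (0 : ℝ) 1)
    (hy : y ∈ Ioc (0 : ℝ) 1) :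
    graphonOfGraph G x y = adjKernel G (vertexAt n x, vertexAt n y) := by
  have hadj : (∃ i j : Fin n, G.Adj i j ∧ ⌈(n : ℝ) * x⌉ = (i : ℤ) + 1 ∧ ⌈(n : ℝ) * y⌉ = (j : ℤ) + 1)
      ↔ G.Adj (vertexAt n x) (vertexAt n y) := by
    refine ⟨?_, fun h => ⟨_, _, h, mem_cell_iff.1 (mem_cell_vertexAt hx),
      mem_cell_iff.1 (mem_cell_vertexAt hy)⟩⟩
    rintro ⟨i, j, hij, hi, hj⟩
    rwa [vertexAt_eq_of_mem_cell (mem_cell_iff.2 hi), vertexAt_eq_of_mem_cell (mem_cell_iff.2 hj)]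
  by_cases h : G.Adj (vertexAt n x) (vertexAt n y)
  · rw [graphonOfGraph, adjKernel, if_pos (hadj.2 h), if_pos h]
  · rw [graphonOfGraph, adjKernel, if_neg (mt hadj.1 h), if_neg h]

/-- The map of `[0, 1]` which permutes the cells by `π`, translating each of them. -/
def cellPerm (π : Equiv.Perm (Fin n)) (x : ℝ) : ℝ :=
  if x ∈ Ioc 0 1 then x + ((π (vertexAt n x) : ℝ) - vertexAt n x) / n else x

lemma cellPerm_of_mem_cell (π : Equiv.Perm (Fin n)) {v : Fin n} {x : ℝ} (hx : x ∈ cell n v) :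
    cellPerm π x = x + ((π v : ℝ) - v) / n := by
  rw [cellPerm, if_pos (cell_subset_Ioc v hx), vertexAt_eq_of_mem_cell hx]

lemma cellPerm_mem_cell (π : Equiv.Perm (Fin n)) {v : Fin n} {x : ℝ} (hx : x ∈ cell n v) :
    cellPerm π x ∈ cell n (π v) := by
  rw [cellPerm_of_mem_cell π hx]
  exact (preimage_add_const_cell v (π v)).ge hx

lemma vertexAt_cellPerm (π : Equiv.Perm (Fin n)) {x : ℝ} (hx : x ∈ Ioc (0 : ℝ) 1) :
    vertexAt n (cellPerm π x) = π (vertexAt n x) :=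
  vertexAt_eq_of_mem_cell (cellPerm_mem_cell π (mem_cell_vertexAt hx))

lemma measurable_cellPerm (π : Equiv.Perm (Fin n)) : Measurable (cellPerm π) :=
  Measurable.ite measurableSet_Ioc (measurable_id.add
    ((measurable_of_finite fun v : Fin n => ((π v : ℝ) - v) / n).comp (measurable_vertexAt n)))
    measurable_id

lemma map_cellPerm_restrict_cell (π : Equiv.Perm (Fin n)) (v : Fin n) :
    (volume.restrict (cell n v)).map (cellPerm π) = volume.restrict (cell n (π v)) := by
  have htranslate : cellPerm π =ᵐ[volume.restrict (cell n v)] fun x => x + ((π v : ℝ) - v) / n :=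
    (ae_restrict_mem measurableSet_Ioc).mono fun x hx => cellPerm_of_mem_cell π hx
  have hpreserving := (measurePreserving_add_right volume (((π v : ℝ) - v) / n)).restrict_preimage
    (s := cell n (π v)) measurableSet_Ioc
  rw [preimage_add_const_cell] at hpreserving
  rw [Measure.map_congr htranslate, hpreserving.map_eq]

lemma isMPSelf_cellPerm (π : Equiv.Perm (Fin n)) : IsMPSelf (cellPerm π) := by
  refine ⟨⟨measurable_cellPerm π, ?_⟩, fun x hx => ?_⟩
  · change unitMeasure.map (cellPerm π) = unitMeasure
    rw [unitMeasure_eq_sum_restrict_cell n, ← Measure.sum_fintype,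
      Measure.map_sum (measurable_cellPerm π).aemeasurable, Measure.sum_fintype,
      Measure.sum_fintype, Finset.sum_congr rfl fun v _ => map_cellPerm_restrict_cell π v,
      Equiv.sum_comp π fun v => volume.restrict (cell n v)]
  · by_cases hx' : x ∈ Ioc (0 : ℝ) 1
    · exact Ioc_subset_Icc_self (cell_subset_Ioc _ (cellPerm_mem_cell π (mem_cell_vertexAt hx')))
    · rwa [cellPerm, if_neg hx']

end UnitInterval

section CutNorm

variable {α β : Type*} [MeasurableSpace α] [MeasurableSpace β]

/-- `R` bounds the integrals of `F` over measurable rectangles: the cut norm of a kernel on `[0, 1]`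
is the least such `R`. Stating bounds in this form lets them be transported between `[0, 1]` and the
vertex set of a graph. -/
def IsCutBound (μ : Measure α) (F : α × α → ℝ) (R : ℝ) : Prop :=
  ∀ S T : Set α, MeasurableSet S → MeasurableSet T → |∫ p in S ×ˢ T, F p ∂μ.prod μ| ≤ R

lemma integral_le_of_forall_setIntegral_le {μ ν : Measure α} (hν : ν ≤ μ) {g : α → ℝ}
    (hg : StronglyMeasurable g) (hgi : Integrable g μ) {R : ℝ}
    (hR : ∀ S, MeasurableSet S → ∫ x in S, g x ∂μ ≤ R) : ∫ x, g x ∂ν ≤ R := by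
  have hS : MeasurableSet {x | 0 ≤ g x} := stronglyMeasurable_const.measurableSet_le hg
  have hpos : ∀ x, max (g x) 0 = {x | 0 ≤ g x}.indicator g x := fun x => by
    simp only [indicator_apply, mem_ofPred, max_def']
  calc ∫ x, g x ∂ν ≤ ∫ x, max (g x) 0 ∂ν :=
        integral_mono (hgi.mono_measure hν) (hgi.mono_measure hν).pos_part fun _ => le_max_left _ _
    _ ≤ ∫ x, max (g x) 0 ∂μ :=
        integral_mono_measure hν (ae_of_all _ fun _ => le_max_right _ _) hgi.pos_part
    _ = ∫ x in {x | 0 ≤ g x}, g x ∂μ := by simp only [hpos, integral_indicator hS]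
    _ ≤ R := hR _ hS

lemma abs_integral_le_of_forall_abs_setIntegral_le {μ ν : Measure α} (hν : ν ≤ μ) {g : α → ℝ}
    (hg : StronglyMeasurable g) (hgi : Integrable g μ) {R : ℝ}
    (hR : ∀ S, MeasurableSet S → |∫ x in S, g x ∂μ| ≤ R) : |∫ x, g x ∂ν| ≤ R := by
  refine abs_le'.2 ⟨integral_le_of_forall_setIntegral_le hν hg hgi fun S hS =>
    (abs_le'.1 (hR S hS)).1, ?_⟩
  rw [← integral_neg]
  refine integral_le_of_forall_setIntegral_le hν hg.neg hgi.neg fun S hS => ?_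
  simpa only [Pi.neg_apply, integral_neg] using (abs_le'.1 (hR S hS)).2

namespace IsCutBound

variable {μ : Measure α} {F F' : α × α → ℝ} {R R' : ℝ}

lemma add (hF : IsCutBound μ F R) (hF' : IsCutBound μ F' R') (hFi : Integrable F (μ.prod μ))
    (hFi' : Integrable F' (μ.prod μ)) : IsCutBound μ (F + F') (R + R') := by
  intro S T hS hT
  simp only [Pi.add_apply]
  rw [integral_add hFi.integrableOn hFi'.integrableOn]
  exact (abs_add_le _ _).trans (add_le_add (hF S T hS hT) (hF' S T hS hT))

lemma congr_ae (hF : IsCutBound μ F R) (h : F =ᵐ[μ.prod μ] F') : IsCutBound μ F' R :=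
  fun S T hS hT => by simpa only [integral_congr_ae (ae_restrict_of_ae h)] using hF S T hS hT

lemma integral_abs (hF : Integrable F (μ.prod μ)) : IsCutBound μ F (∫ p, |F p| ∂μ.prod μ) :=
  fun _ _ _ _ => abs_integral_le_integral_abs.trans
    (setIntegral_le_integral hF.abs (ae_of_all _ fun _ => abs_nonneg _))

variable [IsFiniteMeasure μ]

lemma abs_integral_prod_le (hF : IsCutBound μ F R) (hFm : StronglyMeasurable F)
    (hFi : Integrable F (μ.prod μ)) {ν₁ ν₂ : Measure α} (hν₁ : ν₁ ≤ μ) (hν₂ : ν₂ ≤ μ) :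
    |∫ p, F p ∂ν₁.prod ν₂| ≤ R := by
  have := isFiniteMeasure_of_le μ hν₁
  have := isFiniteMeasure_of_le μ hν₂
  have hint {κ₁ κ₂ : Measure α} [IsFiniteMeasure κ₁] [IsFiniteMeasure κ₂] (h₁ : κ₁ ≤ μ)
      (h₂ : κ₂ ≤ μ) : Integrable F (κ₁.prod κ₂) := hFi.mono_measure (Measure.prod_mono h₁ h₂)
  rw [integral_prod _ (hint hν₁ hν₂)]
  refine abs_integral_le_of_forall_abs_setIntegral_le hν₁ hFm.integral_prod_right'
    (hint le_rfl hν₂).integral_prod_left fun S hS => ?_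
  have hSμ : μ.restrict S ≤ μ := Measure.restrict_le_self
  rw [← integral_prod _ (hint hSμ hν₂), integral_prod_symm _ (hint hSμ hν₂)]
  refine abs_integral_le_of_forall_abs_setIntegral_le hν₂ hFm.integral_prod_left'
    (hint hSμ le_rfl).integral_prod_right fun T hT => ?_
  rw [← integral_prod_symm _ (hint hSμ Measure.restrict_le_self), Measure.prod_restrict]
  exact hF S T hS hT

/-- The preimage of a cut under `φ` is a weighted cut, and the integral over a weighted cut is
extremal at `{0, 1}`-valued weights. -/
lemma comp {κ : Measure β} [SFinite κ] {φ : β → α} (hF : IsCutBound μ F R)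
    (hφ : MeasurePreserving φ κ μ) (hFm : StronglyMeasurable F) (hFi : Integrable F (μ.prod μ)) :
    IsCutBound κ (F ∘ Prod.map φ φ) R := by
  intro S T _ _
  have hle : ∀ A, (κ.restrict A).map φ ≤ μ := fun A =>
    hφ.map_eq ▸ Measure.map_mono Measure.restrict_le_self hφ.measurable
  have hmap : ∫ p in S ×ˢ T, (F ∘ Prod.map φ φ) p ∂κ.prod κ
      = ∫ p, F p ∂((κ.restrict S).map φ).prod ((κ.restrict T).map φ) := by
    rw [Measure.map_prod_map _ _ hφ.measurable hφ.measurable, integral_map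
      (hφ.measurable.prodMap hφ.measurable).aemeasurable hFm.aestronglyMeasurable,
      Measure.prod_restrict]
    rfl
  rw [hmap]
  exact hF.abs_integral_prod_le hFm hFi (hle S) (hle T)

end IsCutBound

lemma isCutBound_uniformMeasure {n : ℕ} [NeZero n] {F : Fin n × Fin n → ℝ} {R : ℝ}
    (hF : ∀ S T : Finset (Fin n), |∑ w ∈ S ×ˢ T, F w| ≤ R * n ^ 2) :
    IsCutBound (uniformMeasure n) F R := by
  classical
  intro S T _ _
  have hn : (0 : ℝ) < n := Nat.cast_pos.2 (NeZero.pos n)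
  have hsum : ∫ w in S ×ˢ T, F w ∂(uniformMeasure n).prod (uniformMeasure n)
      = (∑ w ∈ S.toFinset ×ˢ T.toFinset, F w) / n ^ 2 := by
    rw [← integral_indicator (Set.toFinite _).measurableSet, integral_uniformMeasure_prod,
      ← toFinset_prod, ← Finset.sum_indicator_subset F (Finset.subset_univ _), coe_toFinset]
  rw [hsum, abs_div, abs_of_pos (pow_pos hn 2), div_le_iff₀ (pow_pos hn 2)]
  exact hF _ _

lemma volume_restrict_Icc_prod_Icc :
    (volume : Measure (ℝ × ℝ)).restrict (Icc 0 1 ×ˢ Icc 0 1) = unitMeasure.prod unitMeasure := by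
  rw [Measure.prod_restrict, Measure.volume_eq_prod]

lemma setIntegral_unitMeasure_prod {S T : Set ℝ} (hS : MeasurableSet S) (hT : MeasurableSet T)
    (F : ℝ × ℝ → ℝ) : ∫ p in S ×ˢ T, F p ∂unitMeasure.prod unitMeasure
      = ∫ p in (S ∩ Icc 0 1) ×ˢ (T ∩ Icc 0 1), F p := by
  rw [← volume_restrict_Icc_prod_Icc, Measure.restrict_restrict (hS.prod hT), prod_inter_prod]

variable {U V W : ℝ → ℝ → ℝ} {R : ℝ}

lemma cutNorm_nonneg (U : ℝ → ℝ → ℝ) : 0 ≤ cutNorm U := by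
  apply Real.sSup_nonneg
  rintro _ ⟨S, T, -, -, -, -, rfl⟩
  exact abs_nonneg _

lemma cutNorm_le (hU : IsCutBound unitMeasure (Function.uncurry U) R) : cutNorm U ≤ R := by
  refine csSup_le ⟨_, ∅, ∅, .empty, .empty, empty_subset _, empty_subset _, rfl⟩ ?_
  rintro _ ⟨S, T, hSm, hTm, hS, hT, rfl⟩
  have h := hU S T hSm hTm
  rwa [setIntegral_unitMeasure_prod hSm hTm, inter_eq_left.2 hS, inter_eq_left.2 hT] at h

lemma isCutBound_cutNorm (hU : Integrable (Function.uncurry U) (unitMeasure.prod unitMeasure)) :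
    IsCutBound unitMeasure (Function.uncurry U) (cutNorm U) := by
  intro S T hS hT
  rw [setIntegral_unitMeasure_prod hS hT]
  refine le_csSup ⟨∫ p, |Function.uncurry U p| ∂unitMeasure.prod unitMeasure, ?_⟩
    ⟨_, _, hS.inter measurableSet_Icc, hT.inter measurableSet_Icc, inter_subset_right,
      inter_subset_right, rfl⟩
  rintro _ ⟨A, B, hAm, hBm, hA, hB, rfl⟩
  have h := IsCutBound.integral_abs hU A B hAm hBm
  rwa [setIntegral_unitMeasure_prod hAm hBm, inter_eq_left.2 hA, inter_eq_left.2 hB] at h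

lemma isMPSelf_id : IsMPSelf id := ⟨.id _, mapsTo_id _⟩

lemma IsMPSelf.comp {σ τ : ℝ → ℝ} (hσ : IsMPSelf σ) (hτ : IsMPSelf τ) : IsMPSelf (σ ∘ τ) :=
  ⟨hσ.1.comp hτ.1, hσ.2.comp hτ.2⟩

lemma deltaCut_nonneg (U V : ℝ → ℝ → ℝ) : 0 ≤ deltaCut U V := by
  apply Real.sInf_nonneg
  rintro _ ⟨_, _, _, _, rfl⟩
  exact cutNorm_nonneg _

lemma deltaCut_le (U V : ℝ → ℝ → ℝ) {σ₁ σ₂ : ℝ → ℝ} (h₁ : IsMPSelf σ₁) (h₂ : IsMPSelf σ₂) :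
    deltaCut U V ≤ cutNorm (fun x y => U (σ₁ x) (σ₁ y) - V (σ₂ x) (σ₂ y)) := by
  refine csInf_le ⟨0, ?_⟩ ⟨σ₁, σ₂, h₁, h₂, rfl⟩
  rintro _ ⟨_, _, _, _, rfl⟩
  exact cutNorm_nonneg _

namespace IsGraphon

lemma comp (hW : IsGraphon W) {σ : ℝ → ℝ} (hσ : Measurable σ) :
    IsGraphon fun x y => W (σ x) (σ y) :=
  ⟨fun _ _ => hW.1 _ _, hW.2.1.comp (hσ.prodMap hσ), fun _ _ => hW.2.2 _ _⟩

lemma measurable_sub (hU : IsGraphon U) (hV : IsGraphon V) :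
    Measurable (Function.uncurry fun x y => U x y - V x y) :=
  hU.2.1.sub hV.2.1

lemma integrable_sub (hU : IsGraphon U) (hV : IsGraphon V) :
    Integrable (Function.uncurry fun x y => U x y - V x y) (unitMeasure.prod unitMeasure) :=
  have hint {W : ℝ → ℝ → ℝ} (hW : IsGraphon W) :
      Integrable (Function.uncurry W) (unitMeasure.prod unitMeasure) :=
    .of_mem_Icc 0 1 hW.2.1.aemeasurable (ae_of_all _ fun p => hW.2.2 p.1 p.2)
  (hint hU).sub (hint hV)

end IsGraphon

lemma isGraphon_graphonOfGraph {n : ℕ} (G : SimpleGraph (Fin n)) :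
    IsGraphon (graphonOfGraph G) := by
  classical
  refine ⟨fun x y => ?_, ?_, fun x y => ?_⟩
  · rw [graphonOfGraph, graphonOfGraph]
    congr 1
    rw [exists_comm]
    simp only [G.adj_comm, and_comm]
  · have hceil : Measurable fun x : ℝ => ⌈(n : ℝ) * x⌉ :=
      Int.measurable_ceil.comp (measurable_const.mul measurable_id)
    exact (measurable_of_countable fun z : ℤ × ℤ => if ∃ i j : Fin n, G.Adj i j ∧
      z.1 = (i : ℤ) + 1 ∧ z.2 = (j : ℤ) + 1 then (1 : ℝ) else 0).comp (hceil.prodMap hceil)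
  · unfold graphonOfGraph
    split_ifs <;> simp

/-- The triangle inequality, for a distance in which only `U` is rearranged; rearranging `W` instead
would need a common refinement of two rearrangements. -/
lemma deltaCut_le_cutNorm_add_deltaCut (hU : IsGraphon U) (hV : IsGraphon V) (hW : IsGraphon W)
    {σ : ℝ → ℝ} (hσ : IsMPSelf σ) :
    deltaCut U V ≤ cutNorm (fun x y => U (σ x) (σ y) - W x y) + deltaCut W V := by
  rw [← sub_le_iff_le_add']
  refine le_csInf ⟨_, id, id, isMPSelf_id, isMPSelf_id, rfl⟩ ?_
  rintro _ ⟨σ₁, σ₂, h₁, h₂, rfl⟩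
  rw [sub_le_iff_le_add']
  refine (deltaCut_le U V (hσ.comp h₁) h₂).trans (cutNorm_le ?_)
  have hUσ := hU.comp hσ.1.measurable
  have hWσ₁ := hW.comp h₁.1.measurable
  have hbound₁ := (isCutBound_cutNorm (hUσ.integrable_sub hW)).comp h₁.1
    (hUσ.measurable_sub hW).stronglyMeasurable (hUσ.integrable_sub hW)
  have hbound₂ := isCutBound_cutNorm (hWσ₁.integrable_sub (hV.comp h₂.1.measurable))
  refine (hbound₁.add hbound₂ ((hUσ.comp h₁.1.measurable).integrable_sub hWσ₁)
    (hWσ₁.integrable_sub (hV.comp h₂.1.measurable))).congr_ae (ae_of_all _ fun p => ?_)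
  exact sub_add_sub_cancel _ _ _

end CutNorm

section Subsequences

open scoped Topology

lemma exists_subseq_forall_tendsto_of_mem_Icc {ι : Type*} [Countable ι] {a : ℕ → ι → ℝ}
    (ha : ∀ k i, a k i ∈ Icc (0 : ℝ) 1) : ∃ ψ : ℕ → ℕ, StrictMono ψ ∧
      ∃ l : ι → ℝ, ∀ i, Tendsto (fun k => a (ψ k) i) atTop (𝓝 (l i)) := by
  obtain ⟨l, -, ψ, hψ, hl⟩ := (isCompact_univ_pi fun _ : ι => isCompact_Icc).tendsto_subseq
    (x := a) fun k i _ => ha k i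
  exact ⟨ψ, hψ, l, tendsto_pi_nhds.1 hl⟩

lemma exists_diagonal_tendsto {E : Type*} [PseudoMetricSpace E] {u : ℕ → ℕ → E} {v : ℕ → E} {x : E}
    (hu : ∀ j, Tendsto (fun k => u k j) atTop (𝓝 (v j))) (hv : Tendsto v atTop (𝓝 x)) :
    ∃ φ : ℕ → ℕ, StrictMono φ ∧ Tendsto (fun j => u (φ j) j) atTop (𝓝 x) := by
  obtain ⟨φ, hφ, hclose⟩ := extraction_forall_of_eventually fun j =>
    Metric.tendsto_nhds.1 (hu j) _ (Nat.one_div_pos_of_nat (α := ℝ) (n := j))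
  refine ⟨φ, hφ, hv.congr_dist ?_⟩
  refine squeeze_zero (fun _ => dist_nonneg) (fun j => ?_) tendsto_one_div_add_atTop_nhds_zero_nat
  rw [dist_comm]
  exact (hclose j).le

lemma cauchySeq_of_norm_sub_sq_eq {E : Type*} [SeminormedAddCommGroup E] {v : ℕ → E} {C : ℝ}
    (hv : ∀ i j, i ≤ j → ‖v j - v i‖ ^ 2 = ‖v j‖ ^ 2 - ‖v i‖ ^ 2) (hC : ∀ j, ‖v j‖ ≤ C) :
    CauchySeq v := by
  have hmono : Monotone fun j => ‖v j‖ ^ 2 := fun i j hij =>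
    sub_nonneg.1 (hv i j hij ▸ sq_nonneg _)
  have hbdd : BddAbove (range fun j => ‖v j‖ ^ 2) :=
    ⟨C ^ 2, forall_mem_range.2 fun j => pow_le_pow_left₀ (norm_nonneg _) (hC j) 2⟩
  have hcauchy := (tendsto_atTop_ciSup hmono hbdd).cauchySeq
  rw [Metric.cauchySeq_iff'] at hcauchy ⊢
  intro ε hε
  obtain ⟨N, hN⟩ := hcauchy (ε ^ 2) (by positivity)
  refine ⟨N, fun j hj => ?_⟩
  have h := hN j hj
  rw [Real.dist_eq, ← hv N j hj, abs_of_nonneg (sq_nonneg _)] at h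
  rw [dist_eq_norm]
  exact lt_of_pow_lt_pow_left₀ 2 hε.le h

variable {α : Type*} [MeasurableSpace α] {μ : Measure α}

lemma norm_toLp_sq {f : α → ℝ} (hf : MemLp f 2 μ) : ‖hf.toLp f‖ ^ 2 = ∫ x, f x ^ 2 ∂μ := by
  rw [← real_inner_self_eq_norm_sq, L2.inner_def]
  refine integral_congr_ae (hf.coeFn_toLp.mono fun x hx => ?_)
  change inner ℝ (hf.toLp f x) (hf.toLp f x) = f x ^ 2
  rw [hx, real_inner_self_eq_norm_sq, Real.norm_eq_abs, sq_abs]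

variable [IsFiniteMeasure μ]

lemma exists_tendsto_toLp_of_ae_tendsto {F : ℕ → α → ℝ} (hF : ∀ k, MemLp (F k) 2 μ)
    (hF01 : ∀ k x, F k x ∈ Icc (0 : ℝ) 1)
    (hlim : ∀ᵐ x ∂μ, ∃ l, Tendsto (fun k => F k x) atTop (𝓝 l)) :
    ∃ v : Lp ℝ 2 μ, Tendsto (fun k => (hF k).toLp (F k)) atTop (𝓝 v) := by
  obtain ⟨g, hg, hFg⟩ := measurable_limit_of_tendsto_metrizable_ae
    (fun k => (hF k).1.aemeasurable) hlim
  have hg01 : ∀ᵐ x ∂μ, g x ∈ Icc (0 : ℝ) 1 := hFg.mono fun x hx =>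
    isClosed_Icc.mem_of_tendsto hx (Eventually.of_forall fun k => hF01 k x)
  have hgL : MemLp g 2 μ := memLp_of_bounded hg01 hg.aestronglyMeasurable 2
  have hdom : Tendsto (fun k => ∫ x, (F k x - g x) ^ 2 ∂μ) atTop (𝓝 (∫ _, 0 ∂μ)) := by
    refine tendsto_integral_of_dominated_convergence (fun _ => 1)
      (fun k => ((hF k).1.sub hg.aestronglyMeasurable).pow 2) (integrable_const 1)
      (fun k => hg01.mono fun x hx => ?_) (hFg.mono fun x hx => ?_)
    · rw [Real.norm_of_nonneg (sq_nonneg _), sq_le_one_iff_abs_le_one]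
      exact Real.dist_le_of_mem_Icc_01 (hF01 k x) hx
    · have h := (hx.sub_const (g x)).pow 2
      rwa [sub_self, zero_pow two_ne_zero] at h
  refine ⟨hgL.toLp g, tendsto_iff_norm_sub_tendsto_zero.2 ?_⟩
  rw [integral_zero] at hdom
  rw [← Real.sqrt_zero]
  refine hdom.sqrt.congr fun k => ?_
  rw [← MemLp.toLp_sub, ← Real.sqrt_sq (norm_nonneg _), norm_toLp_sq]
  rfl

lemma exists_diagonal_ae_tendsto {F : ℕ → ℕ → α → ℝ} (hF : ∀ k j, Measurable (F k j))
    (hF01 : ∀ k j x, F k j x ∈ Icc (0 : ℝ) 1)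
    (hlim : ∀ j, ∀ᵐ x ∂μ, ∃ l, Tendsto (fun k => F k j x) atTop (𝓝 l))
    (horth : ∀ k i j, i ≤ j →
      ∫ x, (F k j x - F k i x) ^ 2 ∂μ = ∫ x, F k j x ^ 2 ∂μ - ∫ x, F k i x ^ 2 ∂μ)
    {r : ℕ → ℕ → ℝ} {r' : ℕ → ℝ} (hr : ∀ j, Tendsto (fun k => r k j) atTop (𝓝 (r' j)))
    (hr' : Tendsto r' atTop (𝓝 0)) :
    ∃ φ ν : ℕ → ℕ, StrictMono φ ∧ (∀ i, ν i ≤ φ i) ∧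
      Tendsto (fun i => r (φ i) (ν i)) atTop (𝓝 0) ∧
      ∃ g : α → ℝ, ∀ᵐ x ∂μ, Tendsto (fun i => F (φ i) (ν i) x) atTop (𝓝 (g x)) := by
  have hFL (k j : ℕ) : MemLp (F k j) 2 μ :=
    memLp_of_bounded (ae_of_all _ (hF01 k j)) (hF k j).aestronglyMeasurable 2
  let u (k j : ℕ) : Lp ℝ 2 μ := (hFL k j).toLp (F k j)
  choose v hv using fun j => exists_tendsto_toLp_of_ae_tendsto (fun k => hFL k j)
    (fun k => hF01 k j) (hlim j)
  have hu_orth (k i j : ℕ) (hij : i ≤ j) : ‖u k j - u k i‖ ^ 2 = ‖u k j‖ ^ 2 - ‖u k i‖ ^ 2 := by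
    rw [← MemLp.toLp_sub, norm_toLp_sq, norm_toLp_sq, norm_toLp_sq]
    exact horth k i j hij
  have hv_orth (i j : ℕ) (hij : i ≤ j) : ‖v j - v i‖ ^ 2 = ‖v j‖ ^ 2 - ‖v i‖ ^ 2 :=
    tendsto_nhds_unique (((hv j).sub (hv i)).norm.pow 2)
      ((((hv j).norm.pow 2).sub ((hv i).norm.pow 2)).congr fun k => (hu_orth k i j hij).symm)
  have hv_bound (j : ℕ) := le_of_tendsto (hv j).norm (Eventually.of_forall fun k =>
    Lp.norm_le_of_ae_bound zero_le_one ((MemLp.coeFn_toLp _).mono fun x hx => by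
      rw [hx, Real.norm_of_nonneg (hF01 k j x).1]
      exact (hF01 k j x).2))
  obtain ⟨x, hx⟩ := cauchySeq_tendsto_of_complete (cauchySeq_of_norm_sub_sq_eq hv_orth hv_bound)
  obtain ⟨φ, hφ, hdiag⟩ := exists_diagonal_tendsto (fun j => (hv j).prodMk_nhds (hr j))
    (hx.prodMk_nhds hr')
  obtain ⟨ν, hν, hae⟩ := (tendstoInMeasure_of_tendsto_Lp
    ((continuous_fst.tendsto _).comp hdiag)).exists_seq_tendsto_ae
  refine ⟨φ ∘ ν, ν, hφ.comp hν, fun i => hφ.le_apply,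
    ((continuous_snd.tendsto _).comp hdiag).comp hν.tendsto_atTop, x, ?_⟩
  have hcoe : ∀ᵐ y ∂μ, ∀ i, u (φ (ν i)) (ν i) y = F (φ (ν i)) (ν i) y :=
    ae_all_iff.2 fun i => MemLp.coeFn_toLp _
  filter_upwards [hae, hcoe] with y hy hcoe_y
  exact hy.congr hcoe_y

end Subsequences

section Compactness

open scoped Topology

/-- For a monotone `χ`, the point of `[0, 1]` at which `χ` reaches `a`. -/
def levelThreshold (χ : ℝ → ℕ) (a : ℕ) : ℝ := volume.real {y ∈ Ioc (0 : ℝ) 1 | χ y < a}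

lemma levelThreshold_mem_Icc (χ : ℝ → ℕ) (a : ℕ) : levelThreshold χ a ∈ Icc (0 : ℝ) 1 := by
  refine ⟨measureReal_nonneg, (measureReal_mono (sep_subset _ _) measure_Ioc_lt_top.ne).trans ?_⟩
  simp

lemma le_levelThreshold {χ : ℝ → ℕ} (hχ : MonotoneOn χ (Ioc 0 1)) {x : ℝ}
    (hx : x ∈ Ioc (0 : ℝ) 1) {a : ℕ} (h : χ x < a) : x ≤ levelThreshold χ a := by
  have hsub : Ioc 0 x ⊆ {y ∈ Ioc (0 : ℝ) 1 | χ y < a} := fun y hy =>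
    ⟨⟨hy.1, hy.2.trans hx.2⟩, (hχ ⟨hy.1, hy.2.trans hx.2⟩ hx hy.2).trans_lt h⟩
  have hle := measureReal_mono hsub (measure_ne_top_of_subset (sep_subset _ _)
    (measure_Ioc_lt_top (μ := volume)).ne)
  rwa [Real.volume_real_Ioc_of_le hx.1.le, sub_zero] at hle

lemma levelThreshold_le {χ : ℝ → ℕ} (hχ : MonotoneOn χ (Ioc 0 1)) {x : ℝ}
    (hx : x ∈ Ioc (0 : ℝ) 1) {a : ℕ} (h : a ≤ χ x) : levelThreshold χ a ≤ x := by
  have hsub : {y ∈ Ioc (0 : ℝ) 1 | χ y < a} ⊆ Ioc 0 x := fun y hy =>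
    ⟨hy.1.1, le_of_not_ge fun hxy => (h.trans (hχ hx hy.1 hxy)).not_gt hy.2⟩
  have hle := measureReal_mono hsub (measure_Ioc_lt_top (μ := volume)).ne
  rwa [Real.volume_real_Ioc_of_le hx.1.le, sub_zero] at hle

lemma exists_eventually_eq_of_forall {u : ℕ → ℕ} {N : ℕ} (hN : ∀ k, u k < N)
    (hu : ∀ a, (∀ᶠ k in atTop, a ≤ u k) ∨ ∀ᶠ k in atTop, u k < a) :
    ∃ m, ∀ᶠ k in atTop, u k = m := by
  classical
  have hex : ∃ a, ∀ᶠ k in atTop, u k < a := ⟨N, Eventually.of_forall hN⟩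
  obtain ⟨m, hm⟩ : ∃ m, Nat.find hex = m + 1 := Nat.exists_eq_add_one_of_ne_zero fun h0 => by
    obtain ⟨k, hk⟩ := (h0 ▸ Nat.find_spec hex).exists
    exact Nat.not_lt_zero _ hk
  have hge : ∀ᶠ k in atTop, m ≤ u k := (hu m).resolve_right (Nat.find_min hex (by omega))
  refine ⟨m, ?_⟩
  filter_upwards [hm ▸ Nat.find_spec hex, hge] with k h1 h2
  omega

/-- Helly's selection principle, for integer-valued functions. -/
lemma exists_subseq_ae_eventually_eq {χ : ℕ → ℕ → ℝ → ℕ} {N : ℕ → ℕ}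
    (hχ : ∀ j, ∀ᶠ k in atTop, MonotoneOn (χ k j) (Ioc 0 1)) (hN : ∀ k j x, χ k j x < N j) :
    ∃ ψ : ℕ → ℕ, StrictMono ψ ∧
      ∀ j, ∀ᵐ x ∂unitMeasure, ∃ m, ∀ᶠ k in atTop, χ (ψ k) j x = m := by
  obtain ⟨ψ, hψ, s, hs⟩ := exists_subseq_forall_tendsto_of_mem_Icc (ι := ℕ × ℕ)
    (a := fun k i => levelThreshold (χ k i.1) i.2) fun k i => levelThreshold_mem_Icc _ _
  refine ⟨ψ, hψ, fun j => ?_⟩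
  have hne : ∀ᵐ x ∂unitMeasure, ∀ i, x ≠ s i :=
    ae_all_iff.2 fun i => Measure.ae_ne _ _
  filter_upwards [ae_unitMeasure_mem_Ioc, hne] with x hx hxs
  refine exists_eventually_eq_of_forall (fun k => hN (ψ k) j x) fun a => ?_
  have hmono := hψ.tendsto_atTop.eventually (hχ j)
  rcases (hxs (j, a)).lt_or_gt with hlt | hgt
  · right
    filter_upwards [hmono, (hs (j, a)).eventually_const_lt hlt] with k hk hxk
    exact lt_of_not_ge fun h => (levelThreshold_le hk hx h).not_gt hxk
  · left
    filter_upwards [hmono, (hs (j, a)).eventually_lt_const hgt] with k hk hxk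
    exact le_of_not_gt fun h => (le_levelThreshold hk hx h).not_gt hxk

end Compactness

section StepKernel

open scoped Topology

variable {n : ℕ} [NeZero n] {f : Fin n × Fin n → ℝ}

/-- The vertex of a graph which sits at the point `x` of `[0, 1]` once the vertices are sorted by
their colours in `greedyColoring f k`. -/
def sortedVertexAt (f : Fin n × Fin n → ℝ) (k : ℕ) (x : ℝ) : Fin n :=
  Tuple.sort (greedyColoring f k) (vertexAt n x)

lemma measurePreserving_sortedVertexAt (f : Fin n × Fin n → ℝ) (k : ℕ) :
    MeasurePreserving (sortedVertexAt f k) unitMeasure (uniformMeasure n) := by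
  refine ⟨measurable_from_top.comp (measurable_vertexAt n), ?_⟩
  have hcell := (measurePreserving_vertexAt (n := n)).comp
    (isMPSelf_cellPerm (Tuple.sort (greedyColoring f k))).1
  exact (Measure.map_congr (ae_unitMeasure_mem_Ioc.mono fun x hx =>
    (vertexAt_cellPerm _ hx).symm)).trans hcell.map_eq

lemma monotoneOn_greedyColoring_sortedVertexAt (f : Fin n × Fin n → ℝ) {j k : ℕ} (hjk : j ≤ k) :
    MonotoneOn (fun x => greedyColoring f j (sortedVertexAt f k x)) (Ioc 0 1) := by
  intro x hx y hy hxy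
  obtain ⟨i, rfl⟩ := Nat.exists_eq_add_of_le hjk
  simp only [← greedyColoring_add_div f j i]
  exact Nat.div_le_div_right
    (Tuple.monotone_sort (greedyColoring f (j + i)) (monotoneOn_vertexAt hx hy hxy))

/-- The step function on `[0, 1]²` which represents the averages of `f` over the blocks of
`greedyColoring f j`, the vertices being sorted by the finer colouring `greedyColoring f k`. -/
def stepKernel (f : Fin n × Fin n → ℝ) (k j : ℕ) (p : ℝ × ℝ) : ℝ :=
  blockAvg f (greedyColoring f j) (Prod.map (sortedVertexAt f k) (sortedVertexAt f k) p)

lemma measurable_stepKernel (f : Fin n × Fin n → ℝ) (k j : ℕ) : Measurable (stepKernel f k j) :=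
  have hφ := (measurePreserving_sortedVertexAt f k).measurable
  (measurable_of_finite _).comp (hφ.prodMap hφ)

lemma stepKernel_mem_Icc (hf : ∀ w, f w ∈ Icc (0 : ℝ) 1) (k j : ℕ) (p : ℝ × ℝ) :
    stepKernel f k j p ∈ Icc (0 : ℝ) 1 :=
  blockDensity_mem_Icc hf _ _

lemma stepKernel_swap (hf : ∀ w, f w.swap = f w) (k j : ℕ) (p : ℝ × ℝ) :
    stepKernel f k j p.swap = stepKernel f k j p :=
  blockDensity_swap hf _ (Prod.map (greedyColoring f j) (greedyColoring f j)
    (Prod.map (sortedVertexAt f k) (sortedVertexAt f k) p))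

lemma integral_sq_stepKernel_sub (f : Fin n × Fin n → ℝ) (k : ℕ) {i j : ℕ} (hij : i ≤ j) :
    ∫ p, (stepKernel f k j p - stepKernel f k i p) ^ 2 ∂unitMeasure.prod unitMeasure
      = ∫ p, stepKernel f k j p ^ 2 ∂unitMeasure.prod unitMeasure
        - ∫ p, stepKernel f k i p ^ 2 ∂unitMeasure.prod unitMeasure := by
  have hint := integral_comp_prodMap (measurePreserving_sortedVertexAt f k)
  have hsq (l : ℕ) := hint fun w => blockAvg f (greedyColoring f l) w ^ 2
  have hdiff := hint fun w =>
    (blockAvg f (greedyColoring f j) w - blockAvg f (greedyColoring f i) w) ^ 2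
  rw [sum_sq_blockAvg_greedyColoring_sub f hij, sub_div] at hdiff
  exact hdiff.trans (congrArg₂ _ (hsq j).symm (hsq i).symm)

lemma exists_isGraphon_ae_tendsto {F : ℕ → ℝ × ℝ → ℝ} (hF : ∀ i, Measurable (F i))
    (hF01 : ∀ i p, F i p ∈ Icc (0 : ℝ) 1) (hswap : ∀ i p, F i p.swap = F i p)
    {μ : Measure (ℝ × ℝ)} {g : ℝ × ℝ → ℝ}
    (hg : ∀ᵐ p ∂μ, Tendsto (fun i => F i p) atTop (𝓝 (g p))) :
    ∃ W, IsGraphon W ∧ ∀ᵐ p ∂μ, Tendsto (fun i => F i p) atTop (𝓝 (W p.1 p.2)) := by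
  have hle (p : ℝ × ℝ) : IsBoundedUnder (· ≤ ·) atTop fun i => F i p :=
    isBoundedUnder_of ⟨1, fun i => (hF01 i p).2⟩
  have hge (p : ℝ × ℝ) : IsBoundedUnder (· ≥ ·) atTop fun i => F i p :=
    isBoundedUnder_of ⟨0, fun i => (hF01 i p).1⟩
  refine ⟨fun x y => limsup (fun i => F i (x, y)) atTop, ⟨fun x y => ?_, Measurable.limsup hF,
    fun x y => ⟨?_, ?_⟩⟩, hg.mono fun p hp => ?_⟩
  · exact congrArg (limsup · atTop) (funext fun i => hswap i (y, x))
  · exact le_limsup_of_frequently_le (Frequently.of_forall fun i => (hF01 i _).1) (hle _)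
  · exact limsup_le_of_le (hge _).isCoboundedUnder_le (Eventually.of_forall fun i => (hF01 i _).2)
  · rwa [← hp.limsup_eq] at hp

end StepKernel

section Limits

open scoped Topology

variable {n : ℕ → ℕ} [∀ k, NeZero (n k)] {f : ∀ k, Fin (n k) × Fin (n k) → ℝ}

lemma exists_subseq_ae_tendsto_stepKernel (hf : ∀ k w, f k w ∈ Icc (0 : ℝ) 1) :
    ∃ ψ : ℕ → ℕ, StrictMono ψ ∧
      (∀ j, ∃ l, Tendsto (fun k => greedyResidual (f (ψ k)) j) atTop (𝓝 l)) ∧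
      ∀ j, ∀ᵐ p ∂unitMeasure.prod unitMeasure,
        ∃ l, Tendsto (fun k => stepKernel (f (ψ k)) (ψ k) j p) atTop (𝓝 l) := by
  obtain ⟨ψ₁, hψ₁, hcolor⟩ := exists_subseq_ae_eventually_eq
    (χ := fun k j x => greedyColoring (f k) j (sortedVertexAt (f k) k x)) (N := fun j => 4 ^ j)
    (fun j => (eventually_ge_atTop j).mono fun k hk =>
      monotoneOn_greedyColoring_sortedVertexAt (f k) hk)
    fun k j x => greedyColoring_lt (f k) j _
  let data (k : ℕ) : ℕ ⊕ ℕ × (ℕ × ℕ) → ℝ := Sum.elim (greedyResidual (f k))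
    fun i => blockDensity (f k) (greedyColoring (f k) i.1) i.2
  have hdata (k : ℕ) : ∀ i, data k i ∈ Icc (0 : ℝ) 1
    | .inl j => ⟨greedyResidual_nonneg _ j, greedyResidual_le_one (hf k) j⟩
    | .inr i => blockDensity_mem_Icc (hf k) _ i.2
  obtain ⟨ψ₂, hψ₂, l, hl⟩ := exists_subseq_forall_tendsto_of_mem_Icc fun k => hdata (ψ₁ k)
  refine ⟨ψ₁ ∘ ψ₂, hψ₁.comp hψ₂, fun j => ⟨_, hl (.inl j)⟩, fun j => ?_⟩
  filter_upwards [Measure.quasiMeasurePreserving_fst.ae (hcolor j),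
    Measure.quasiMeasurePreserving_snd.ae (hcolor j)] with p ⟨a, ha⟩ ⟨b, hb⟩
  refine ⟨l (.inr (j, a, b)), (hl (.inr (j, a, b))).congr' ?_⟩
  filter_upwards [hψ₂.tendsto_atTop.eventually ha, hψ₂.tendsto_atTop.eventually hb] with k hak hbk
  simp only [data, Sum.elim_inr, ← hak, ← hbk]
  rfl

lemma tendsto_zero_of_sum_sq_le_one {r : ℕ → ℝ} (hr : ∀ J, ∑ j ∈ Finset.range J, r j ^ 2 ≤ 1) :
    Tendsto r atTop (𝓝 0) := by
  have hsq := (summable_of_sum_range_le (fun j => sq_nonneg (r j)) hr).tendsto_atTop_zero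
  refine squeeze_zero_norm (fun j => ?_) (Real.sqrt_zero ▸ hsq.sqrt)
  rw [Real.sqrt_sq_eq_abs, Real.norm_eq_abs]

lemma exists_isGraphon_ae_tendsto_stepKernel (hf : ∀ k w, f k w ∈ Icc (0 : ℝ) 1)
    (hswap : ∀ k w, f k w.swap = f k w) :
    ∃ (W : ℝ → ℝ → ℝ) (ψ ν : ℕ → ℕ), IsGraphon W ∧ StrictMono ψ ∧ (∀ i, ν i ≤ ψ i) ∧
      Tendsto (fun i => greedyResidual (f (ψ i)) (ν i)) atTop (𝓝 0) ∧
      ∀ᵐ p ∂unitMeasure.prod unitMeasure,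
        Tendsto (fun i => stepKernel (f (ψ i)) (ψ i) (ν i) p) atTop (𝓝 (W p.1 p.2)) := by
  obtain ⟨ψ, hψ, hres, hstep⟩ := exists_subseq_ae_tendsto_stepKernel hf
  choose r hr using hres
  have hr0 : Tendsto r atTop (𝓝 0) := tendsto_zero_of_sum_sq_le_one fun J =>
    le_of_tendsto (tendsto_finsetSum _ fun j _ => (hr j).pow 2)
      (Eventually.of_forall fun k => sum_sq_greedyResidual_le_one (hf (ψ k)) J)
  obtain ⟨φ, ν, hφ, hνφ, hres0, g, hg⟩ := exists_diagonal_ae_tendsto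
    (F := fun k j => stepKernel (f (ψ k)) (ψ k) j) (fun k j => measurable_stepKernel _ _ _)
    (fun k j => stepKernel_mem_Icc (hf (ψ k)) _ _) hstep
    (fun k i j hij => integral_sq_stepKernel_sub _ _ hij) hr hr0
  obtain ⟨W, hW, hlim⟩ := exists_isGraphon_ae_tendsto (fun i => measurable_stepKernel _ _ _)
    (fun i => stepKernel_mem_Icc (hf _) _ _) (fun i => stepKernel_swap (hswap _) _ _) hg
  exact ⟨W, ψ ∘ φ, ν, hW, hψ.comp hφ, fun i => (hνφ i).trans hψ.le_apply, hres0, hlim⟩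

end Limits

section EntropyLimit

open scoped Topology

lemma binEnt_eq_binEntropy_div (x : ℝ) : binEnt x = Real.binEntropy x / Real.log 2 := by
  unfold binEnt Real.binEntropy Real.logb
  rw [Real.log_inv, Real.log_inv]
  ring

lemma continuous_binEnt : Continuous binEnt := by
  rw [funext binEnt_eq_binEntropy_div]
  exact Real.binEntropy_continuous.div_const _

lemma binEnt_mem_Icc {x : ℝ} (hx : x ∈ Icc (0 : ℝ) 1) : binEnt x ∈ Icc (0 : ℝ) 1 := by
  have hlog : 0 < Real.log 2 := Real.log_pos one_lt_two
  rw [binEnt_eq_binEntropy_div]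
  exact ⟨div_nonneg (Real.binEntropy_nonneg hx.1 hx.2) hlog.le,
    (div_le_one hlog).2 Real.binEntropy_le_log_two⟩

lemma IsGraphon.graphonEnt_eq_integral_prod {W : ℝ → ℝ → ℝ} (hW : IsGraphon W) :
    graphonEnt W = ∫ p, binEnt (W p.1 p.2) ∂unitMeasure.prod unitMeasure :=
  (integral_prod (fun p : ℝ × ℝ => binEnt (W p.1 p.2))
    (.of_mem_Icc 0 1 (continuous_binEnt.measurable.comp hW.2.1).aemeasurable
      (ae_of_all _ fun p => binEnt_mem_Icc (hW.2.2 p.1 p.2)))).symm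

lemma IsGraphon.graphonEnt_le_one {W : ℝ → ℝ → ℝ} (hW : IsGraphon W) : graphonEnt W ≤ 1 := by
  rw [hW.graphonEnt_eq_integral_prod]
  have hmem (p : ℝ × ℝ) := binEnt_mem_Icc (hW.2.2 p.1 p.2)
  refine (integral_mono_of_nonneg (ae_of_all _ fun p => (hmem p).1) (integrable_const 1)
    (ae_of_all _ fun p => (hmem p).2)).trans_eq ?_
  simp

lemma integral_binEnt_stepKernel {n : ℕ} [NeZero n] (f : Fin n × Fin n → ℝ) (k j : ℕ) :
    ∫ p, binEnt (stepKernel f k j p) ∂unitMeasure.prod unitMeasure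
      = blockEntropy f (greedyColoring f j) / n ^ 2 :=
  integral_comp_prodMap (measurePreserving_sortedVertexAt f k)
    fun w => binEnt (blockAvg f (greedyColoring f j) w)

lemma graphonOfGraph_cellPerm {n : ℕ} [NeZero n] (G : SimpleGraph (Fin n)) {x y : ℝ}
    (hx : x ∈ Ioc (0 : ℝ) 1) (hy : y ∈ Ioc (0 : ℝ) 1) (π : Equiv.Perm (Fin n)) :
    graphonOfGraph G (cellPerm π x) (cellPerm π y)
      = adjKernel G (π (vertexAt n x), π (vertexAt n y)) := by
  have hmem {z : ℝ} (hz : z ∈ Ioc (0 : ℝ) 1) : cellPerm π z ∈ Ioc (0 : ℝ) 1 :=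
    cell_subset_Ioc _ (cellPerm_mem_cell π (mem_cell_vertexAt hz))
  rw [graphonOfGraph_eq_adjKernel G (hmem hx) (hmem hy), vertexAt_cellPerm π hx,
    vertexAt_cellPerm π hy]

lemma cutNorm_graphonOfGraph_cellPerm_sub_le {n : ℕ} [NeZero n] (G : SimpleGraph (Fin n))
    {W : ℝ → ℝ → ℝ} (hW : IsGraphon W) (k j : ℕ) :
    let σ := cellPerm (Tuple.sort (greedyColoring (adjKernel G) k))
    cutNorm (fun x y => graphonOfGraph G (σ x) (σ y) - W x y) ≤ greedyResidual (adjKernel G) j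
      + ∫ p, |stepKernel (adjKernel G) k j p - W p.1 p.2| ∂unitMeasure.prod unitMeasure := by
  intro σ
  set f := adjKernel G
  have hφ := measurePreserving_sortedVertexAt f k
  have hresidual := (isCutBound_uniformMeasure (R := greedyResidual f j)
    fun S T => Fintype.card_fin n ▸ abs_sum_sub_blockAvg_greedyColoring_le f j S T).comp hφ
    (measurable_of_finite _).stronglyMeasurable .of_finite
  have hresidual_int : Integrable ((fun w => f w - blockAvg f (greedyColoring f j) w) ∘
      Prod.map (sortedVertexAt f k) (sortedVertexAt f k)) (unitMeasure.prod unitMeasure) :=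
    (hφ.prod hφ).integrable_comp_of_integrable .of_finite
  have hstep : Integrable (fun p => stepKernel f k j p - W p.1 p.2)
      (unitMeasure.prod unitMeasure) :=
    (Integrable.of_mem_Icc 0 1 (measurable_stepKernel f k j).aemeasurable
      (ae_of_all _ (stepKernel_mem_Icc (adjKernel_mem_Icc G) k j))).sub
    (.of_mem_Icc 0 1 hW.2.1.aemeasurable (ae_of_all _ fun p => hW.2.2 p.1 p.2))
  refine cutNorm_le ((hresidual.add (.integral_abs hstep) hresidual_int hstep).congr_ae ?_)
  filter_upwards [ae_unitMeasure_prod_mem_Ioc] with p ⟨hp₁, hp₂⟩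
  change _ = graphonOfGraph G (σ p.1) (σ p.2) - W p.1 p.2
  rw [graphonOfGraph_cellPerm G hp₁ hp₂]
  exact sub_add_sub_cancel _ _ _

lemma exists_seq_forall_lt_blockEntropy {A : GraphClass} {c : ℝ}
    (hA : ∀ a < c, ∃ᶠ n in atTop, (2 : ℝ) ^ (a * choose2 n) ≤ Nat.card (A n)) :
    ∃ (n : ℕ → ℕ) (G : ∀ k, SimpleGraph (Fin (n k))), (∀ k, k < n k) ∧ (∀ k, G k ∈ A (n k)) ∧
      ∀ k j, j ≤ k → (c - 1 / (k + 1)) * n k ^ 2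
        < blockEntropy (adjKernel (G k)) (greedyColoring (adjKernel (G k)) j) := by
  have hstep (k : ℕ) : ∃ n, k < n ∧ ∃ G ∈ A n, ∀ j ≤ k, (c - 1 / (k + 1)) * n ^ 2
      < blockEntropy (adjKernel G) (greedyColoring (adjKernel G) j) := by
    have hpos : (0 : ℝ) < 1 / (k + 1) := Nat.one_div_pos_of_nat
    obtain ⟨b, hab, hbc⟩ := exists_between (sub_lt_self c hpos)
    obtain ⟨n, ⟨G, hG, hent⟩, hn⟩ := ((frequently_exists_forall_lt_blockEntropy hab (hA b hbc)
      (Fin (4 ^ k))).and_eventually (eventually_gt_atTop k)).exists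
    refine ⟨n, hn, G, hG, fun j hj => ?_⟩
    have hlt (v : Fin n) : greedyColoring (adjKernel G) j v < 4 ^ k :=
      (greedyColoring_lt _ j v).trans_le (Nat.pow_le_pow_right (by norm_num) hj)
    exact (hent fun v => ⟨_, hlt v⟩).trans_eq
      (blockEntropy_comp_of_injective _ _ Fin.val_injective).symm
  choose n hn G hG hent using hstep
  exact ⟨n, G, hn, hG, hent⟩

lemma tendsto_integral_of_ae_tendsto_of_mem_Icc {α : Type*} [MeasurableSpace α] {μ : Measure α}
    [IsFiniteMeasure μ] {F : ℕ → α → ℝ} {g : α → ℝ} (hmeas : ∀ i, Measurable (F i))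
    (hF : ∀ i x, F i x ∈ Icc (0 : ℝ) 1) (hlim : ∀ᵐ x ∂μ, Tendsto (F · x) atTop (𝓝 (g x))) :
    Tendsto (fun i => ∫ x, F i x ∂μ) atTop (𝓝 (∫ x, g x ∂μ)) :=
  tendsto_integral_of_dominated_convergence (fun _ => 1) (fun i => (hmeas i).aestronglyMeasurable)
    (integrable_const 1)
    (fun i => ae_of_all _ fun x => (Real.norm_of_nonneg (hF i x).1).trans_le (hF i x).2) hlim

lemma IsGraphon.tendsto_integral_binEnt {W : ℝ → ℝ → ℝ} (hW : IsGraphon W)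
    {F : ℕ → ℝ × ℝ → ℝ} (hmeas : ∀ i, Measurable (F i)) (hF : ∀ i p, F i p ∈ Icc (0 : ℝ) 1)
    (hlim : ∀ᵐ p ∂unitMeasure.prod unitMeasure, Tendsto (F · p) atTop (𝓝 (W p.1 p.2))) :
    Tendsto (fun i => ∫ p, binEnt (F i p) ∂unitMeasure.prod unitMeasure) atTop
      (𝓝 (graphonEnt W)) := by
  rw [hW.graphonEnt_eq_integral_prod]
  exact tendsto_integral_of_ae_tendsto_of_mem_Icc
    (fun i => continuous_binEnt.measurable.comp (hmeas i)) (fun i p => binEnt_mem_Icc (hF i p))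
    (hlim.mono fun p hp => (continuous_binEnt.tendsto _).comp hp)

lemma IsGraphon.tendsto_integral_abs_sub {W : ℝ → ℝ → ℝ} (hW : IsGraphon W)
    {F : ℕ → ℝ × ℝ → ℝ} (hmeas : ∀ i, Measurable (F i)) (hF : ∀ i p, F i p ∈ Icc (0 : ℝ) 1)
    (hlim : ∀ᵐ p ∂unitMeasure.prod unitMeasure, Tendsto (F · p) atTop (𝓝 (W p.1 p.2))) :
    Tendsto (fun i => ∫ p, |F i p - W p.1 p.2| ∂unitMeasure.prod unitMeasure) atTop (𝓝 0) := by
  rw [← integral_zero (ℝ × ℝ) ℝ]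
  refine tendsto_integral_of_ae_tendsto_of_mem_Icc (fun i => ((hmeas i).sub hW.2.1).abs)
    (fun i p => ⟨abs_nonneg _, Real.dist_le_of_mem_Icc_01 (hF i p) (hW.2.2 _ _)⟩)
    (hlim.mono fun p hp => ?_)
  simpa using (hp.sub_const (W p.1 p.2)).abs

lemma exists_isGraphon_le_graphonEnt {A : GraphClass} {c : ℝ}
    (hA : ∀ a < c, ∃ᶠ n in atTop, (2 : ℝ) ^ (a * choose2 n) ≤ Nat.card (A n)) :
    ∃ W, IsGraphon W ∧ c ≤ graphonEnt W ∧
      ∃ (n : ℕ → ℕ) (G : ∀ i, SimpleGraph (Fin (n i))) (σ : ℕ → ℝ → ℝ),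
        (∀ i, G i ∈ A (n i)) ∧ Tendsto n atTop atTop ∧ (∀ i, IsMPSelf (σ i)) ∧
        Tendsto (fun i => cutNorm fun x y => graphonOfGraph (G i) (σ i x) (σ i y) - W x y)
          atTop (𝓝 0) := by
  obtain ⟨n, G, hn, hG, hent⟩ := exists_seq_forall_lt_blockEntropy hA
  have (k : ℕ) : NeZero (n k) := ⟨(hn k).ne_bot⟩
  obtain ⟨W, ψ, ν, hW, hψ, hν, hres, hlim⟩ := exists_isGraphon_ae_tendsto_stepKernel
    (fun k => adjKernel_mem_Icc (G k)) fun k => adjKernel_swap (G k)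
  have hmeas (i : ℕ) := measurable_stepKernel (adjKernel (G (ψ i))) (ψ i) (ν i)
  have hmem (i : ℕ) := stepKernel_mem_Icc (adjKernel_mem_Icc (G (ψ i))) (ψ i) (ν i)
  refine ⟨W, hW, ?_, n ∘ ψ, fun i => G (ψ i),
    fun i => cellPerm (Tuple.sort (greedyColoring (adjKernel (G (ψ i))) (ψ i))),
    fun i => hG _, (tendsto_atTop_mono (fun k => (hn k).le) tendsto_id).comp hψ.tendsto_atTop,
    fun i => isMPSelf_cellPerm _, ?_⟩
  · have hlower : Tendsto (fun i => c - 1 / ((ψ i : ℝ) + 1)) atTop (𝓝 c) := by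
      simpa using (tendsto_one_div_add_atTop_nhds_zero_nat.comp hψ.tendsto_atTop).const_sub c
    refine le_of_tendsto_of_tendsto' hlower (hW.tendsto_integral_binEnt hmeas hmem hlim)
      fun i => ?_
    have hpos : (0 : ℝ) < n (ψ i) := Nat.cast_pos.2 (NeZero.pos _)
    rw [integral_binEnt_stepKernel, le_div_iff₀ (by positivity)]
    exact (hent (ψ i) (ν i) (hν i)).le
  · refine squeeze_zero (fun i => cutNorm_nonneg _)
      (fun i => cutNorm_graphonOfGraph_cellPerm_sub_le (G (ψ i)) hW (ψ i) (ν i)) ?_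
    simpa using hres.add (hW.tendsto_integral_abs_sub hmeas hmem hlim)

end EntropyLimit

section Convergence

open scoped Topology

lemma tendsto_choose2_atTop : Tendsto choose2 atTop atTop := by
  have hcast : Tendsto (fun n : ℕ => (n : ℝ)) atTop atTop := tendsto_natCast_atTop_atTop
  exact (hcast.atTop_mul_atTop₀ (tendsto_atTop_add_const_right _ (-1) hcast)).atTop_div_const
    two_pos

lemma frequently_rpow_le_card_of_mul_card_le {A Q : GraphClass} {c δ : ℝ} (hδ : 0 < δ)
    (hQ : ∀ a < c, ∀ᶠ n in atTop, (2 : ℝ) ^ (a * choose2 n) ≤ Nat.card (Q n))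
    (hA : ∃ᶠ n in atTop, δ * Nat.card (Q n) ≤ Nat.card (A n)) :
    ∀ a < c, ∃ᶠ n in atTop, (2 : ℝ) ^ (a * choose2 n) ≤ Nat.card (A n) := by
  intro a hac
  obtain ⟨b, hab, hbc⟩ := exists_between hac
  have hgap : Tendsto (fun n => (2 : ℝ) ^ ((b - a) * choose2 n)) atTop atTop :=
    (tendsto_rpow_atTop_of_base_gt_one 2 one_lt_two).comp
      (tendsto_choose2_atTop.const_mul_atTop (sub_pos.2 hab))
  refine (hA.and_eventually ((hQ b hbc).and (hgap.eventually_ge_atTop δ⁻¹))).mono ?_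
  rintro n ⟨hAn, hQn, hn⟩
  calc (2 : ℝ) ^ (a * choose2 n) ≤ δ * 2 ^ ((b - a) * choose2 n) * 2 ^ (a * choose2 n) :=
        le_mul_of_one_le_left (by positivity) ((inv_le_iff_one_le_mul₀' hδ).1 hn)
    _ = δ * 2 ^ (b * choose2 n) := by
        rw [mul_assoc, ← Real.rpow_add two_pos, ← add_mul, sub_add_cancel]
    _ ≤ δ * Nat.card (Q n) := by gcongr
    _ ≤ Nat.card (A n) := hAn

lemma mem_limitSet_of_tendsto_cutNorm {Q : GraphClass} {W : ℝ → ℝ → ℝ} (hW : IsGraphon W)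
    {n : ℕ → ℕ} {G : ∀ i, SimpleGraph (Fin (n i))} {σ : ℕ → ℝ → ℝ} (hG : ∀ i, G i ∈ Q (n i))
    (hn : Tendsto n atTop atTop) (hσ : ∀ i, IsMPSelf (σ i))
    (hlim : Tendsto (fun i => cutNorm fun x y => graphonOfGraph (G i) (σ i x) (σ i y) - W x y)
      atTop (𝓝 0)) : W ∈ limitSet Q :=
  ⟨hW, n, G, hG, hn, squeeze_zero (fun _ => deltaCut_nonneg _ _)
    (fun i => deltaCut_le _ _ (hσ i) isMPSelf_id) hlim⟩

/-- The large subclass of graphs far from `WQ` would have a limit of entropy at least `c`, which is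
at distance `0` from `WQ`. -/
lemma not_frequently_mul_card_le_card_lt_deltaCut {Q : GraphClass} {WQ : ℝ → ℝ → ℝ}
    (hWQ : IsGraphon WQ) {c ε δ : ℝ} (hε : 0 < ε) (hδ : 0 < δ)
    (huniq : ∀ W ∈ limitSet Q, c ≤ graphonEnt W → deltaCut W WQ = 0)
    (hcount : ∀ a < c, ∀ᶠ n in atTop, (2 : ℝ) ^ (a * choose2 n) ≤ Nat.card (Q n)) :
    ¬ ∃ᶠ n in atTop, δ * Nat.card (Q n) ≤ Nat.card {G : SimpleGraph (Fin n) //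
      G ∈ Q n ∧ ε < deltaCut (graphonOfGraph G) WQ} := by
  intro hfreq
  obtain ⟨W, hW, hent, n, G, σ, hG, hn, hσ, hlim⟩ := exists_isGraphon_le_graphonEnt
    (frequently_rpow_le_card_of_mul_card_le
      (A := fun n => {G | G ∈ Q n ∧ ε < deltaCut (graphonOfGraph G) WQ}) hδ hcount hfreq)
  have hzero : deltaCut W WQ = 0 :=
    huniq W (mem_limitSet_of_tendsto_cutNorm hW (fun i => (hG i).1) hn hσ hlim) hent
  obtain ⟨i, hi⟩ := (hlim.eventually_lt_const hε).exists
  have htri := deltaCut_le_cutNorm_add_deltaCut (isGraphon_graphonOfGraph (G i)) hWQ hW (hσ i)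
  linarith [(hG i).2]

lemma eventually_rpow_le_card_of_tendsto_logb {Q : GraphClass} {c : ℝ}
    (hne : ∀ᶠ n in atTop, (Q n).Nonempty)
    (hcount : Tendsto (fun n => Real.logb 2 (Nat.card (Q n)) / choose2 n) atTop (𝓝 c)) :
    ∀ a < c, ∀ᶠ n in atTop, (2 : ℝ) ^ (a * choose2 n) ≤ Nat.card (Q n) := by
  intro a hac
  filter_upwards [hne, hcount.eventually_const_lt hac, tendsto_choose2_atTop.eventually_gt_atTop 0]
    with n hn hlt hpos
  have := hn.to_subtype
  rw [← Real.le_logb_iff_rpow_le one_lt_two (Nat.cast_pos.2 Nat.card_pos)]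
  exact ((lt_div_iff₀ hpos).1 hlt).le

lemma graphonEnt_le_sSup {Q : GraphClass} {W : ℝ → ℝ → ℝ} (hW : W ∈ limitSet Q) :
    graphonEnt W ≤ sSup (graphonEnt '' limitSet Q) :=
  le_csSup ⟨1, forall_mem_image.2 fun _ hV => hV.1.graphonEnt_le_one⟩ (mem_image_of_mem _ hW)

theorem stmt12_general (Q : GraphClass) (WQ : ℝ → ℝ → ℝ) (hWQ : IsGraphon WQ) (c : ℝ)
    (huniq : ∀ W ∈ limitSet Q, c ≤ graphonEnt W → deltaCut W WQ = 0)
    (hcount : ∀ a < c, ∀ᶠ n in atTop, (2 : ℝ) ^ (a * choose2 n) ≤ Nat.card (Q n))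
    (ε : ℝ) (hε : 0 < ε) :
    Tendsto (fun n : ℕ => (Nat.card {G : SimpleGraph (Fin n) //
        G ∈ Q n ∧ ε < deltaCut (graphonOfGraph G) WQ} : ℝ) / Nat.card (Q n)) atTop (𝓝 0) := by
  refine tendsto_order.2 ⟨fun a ha => .of_forall fun n => ha.trans_le (by positivity),
    fun δ hδ => ?_⟩
  have hfew := not_frequently.1
    (not_frequently_mul_card_le_card_lt_deltaCut hWQ hε hδ huniq hcount)
  filter_upwards [hfew] with n hn
  have hlt := not_le.1 hn
  have hpos : (0 : ℝ) < Nat.card (Q n) :=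
    (pos_iff_pos_of_mul_pos ((Nat.cast_nonneg _).trans_lt hlt)).1 hδ
  exact (div_lt_iff₀ hpos).2 hlt

end Convergence

/-- Theorem 1.5: if the maximal entropy over `Q̂` is attained at a
unique graph limit `W_Q` and `log₂|Q_n|/C(n,2) → Ent(W_Q)`, then a uniformly random
element of `Q_n` converges to `W_Q` in probability. -/
theorem stmt12 (Q : GraphClass) (hQ : IsGraphClass Q)
    (hne : ∃ N : ℕ, ∀ n ≥ N, (Q n).Nonempty)
    (WQ : ℝ → ℝ → ℝ) (hWQ : WQ ∈ limitSet Q)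
    (hmax : graphonEnt WQ = sSup (graphonEnt '' limitSet Q))
    (huniq : ∀ W ∈ limitSet Q, graphonEnt W = graphonEnt WQ → deltaCut W WQ = 0)
    (hcount : Filter.Tendsto
      (fun n : ℕ => Real.logb 2 (Nat.card ↥(Q n) : ℝ) / choose2 n)
      Filter.atTop (nhds (graphonEnt WQ))) :
    ∀ ε : ℝ, 0 < ε →
      Filter.Tendsto (fun n : ℕ =>
          (Nat.card {G : SimpleGraph (Fin n) //
              G ∈ Q n ∧ ε < deltaCut (graphonOfGraph G) WQ} : ℝ) /
            (Nat.card ↥(Q n) : ℝ))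
        Filter.atTop (nhds 0) :=
  stmt12_general Q WQ hWQ.1 (graphonEnt WQ)
    (fun W hW hent => huniq W hW ((hmax ▸ graphonEnt_le_sSup hW).antisymm hent))
    (eventually_rpow_le_card_of_tendsto_logb (eventually_atTop.2 hne) hcount)

end
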